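/- arXiv:1005.5716 — 4 statements merged into one kernel-verified Lean document; each statement's English description precedes it below -/
import Mathlib

section
/- If p = C n^{-1/2} for some constant C > 0 and ε' > 0, then G(n,p) asymptotically almost surely satisfies the following: every subgraph G' of G(n,p) with minimum degree at least ε'np has the property that every vertex set X with |X| ≤ (ε'/80)n satisfies |N_{G'}(X) ∖ X| ≥ 2|X|. -/
/-!
Write `d = ε'np`. If some `G' ≤ G` of minimum degree at least `d` has a set `X` with
`|X| ≤ ε'n/80` and `|N_{G'}(X) ∖ X| < 2|X|`, then `Y = X ∪ N_{G'}(X)` has at most `3|X|` vertices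
and contains all edges of `G'` meeting `X`. Counting degrees over `X`, the graph `G` has at least
`k = |Y| d / 6` edges inside `Y` (`exists_dense_of_not_expands`).

The expected number of edges inside `Y` is at most `p |Y|² / 2 ≤ 9k/80`, because
`|Y| ≤ 3ε'n/80`. Markov's inequality for `2 ^ e(Y)`, whose expectation is computed exactly in
`sum_weight_mul_pow`, bounds the probability of such a dense `Y` by
`exp (9k/80 - k log 2) ≤ exp (-k/2) = q ^ |Y|` with `q = exp (-d/12)`
(`sum_weight_mul_exp_le`). Summing over all nonempty `Y`, the failure probability is at most
`(1 + q) ^ n - 1 ≤ exp (n q) - 1` (`le_gnpProb_of_dense`). Since `d = ε' C √n`, the product `n q`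
tends to `0`.
-/

open Filter Topology Classical

/-- Probability that a graph drawn from the binomial random graph G(n,p) (each pair of
vertices forming an edge independently with probability p) satisfies the predicate P. -/
noncomputable def gnpProb (V : Type) [Fintype V] [DecidableEq V] (p : ℝ)
    (P : SimpleGraph V → Prop) : ℝ :=
  ∑ G : SimpleGraph V,
    if P G then p ^ G.edgeSet.ncard *
      (1 - p) ^ ((Fintype.card V).choose 2 - G.edgeSet.ncard) else 0

/-- The neighborhood of a vertex set: all vertices adjacent to at least one vertex of X. -/
def setNbhd {V : Type} (G : SimpleGraph V) (X : Finset V) : Set V :=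
  {u | ∃ v ∈ X, G.Adj v u}

/-- The total degree of a vertex set. -/
noncomputable def totalDeg {V : Type} (G : SimpleGraph V) (X : Finset V) : ℝ :=
  ∑ v ∈ X, ((G.neighborSet v).ncard : ℝ)

/-- The edges of the complete graph with both endpoints in `Y`. -/
noncomputable def pairsIn {V : Type} [DecidableEq V] (Y : Finset V) : Finset (Sym2 V) :=
  Y.offDiag.image Sym2.mk.uncurry

/-- The probability that `G(n,p)` equals the given graph `G`. -/
noncomputable def gnpWeight {V : Type} [Fintype V] (p : ℝ) (G : SimpleGraph V) : ℝ :=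
  p ^ G.edgeSet.ncard * (1 - p) ^ ((Fintype.card V).choose 2 - G.edgeSet.ncard)

/-- The moment generating function of a binomial variable: for `G` drawn from `G(n,p)`, the
expectation of `t ^ |E(G) ∩ S|` is `(1 + (t - 1) p) ^ |S|`. Graphs correspond to subsets of the edge
set of the complete graph, and the sum over those factorises by `Finset.prod_add`. -/
lemma sum_weight_mul_pow {V : Type} [Fintype V] [DecidableEq V] (p t : ℝ)
    (S : Finset (Sym2 V)) (hS : S ⊆ (⊤ : SimpleGraph V).edgeFinset) :
    ∑ G : SimpleGraph V, gnpWeight p G * t ^ (G.edgeFinset ∩ S).card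
      = (1 + (t - 1) * p) ^ S.card := by
  have key := Finset.prod_add (fun e : Sym2 V => p * (if e ∈ S then t else 1))
    (fun _ => 1 - p) (⊤ : SimpleGraph V).edgeFinset
  have hl : ∏ e ∈ (⊤ : SimpleGraph V).edgeFinset, (p * (if e ∈ S then t else 1) + (1 - p))
      = (1 + (t - 1) * p) ^ S.card := by
    rw [← Finset.prod_subset hS, Finset.prod_congr rfl (g := fun _ => 1 + (t - 1) * p)]
    · simp
    · intro e he
      simp only [he, if_true]; ring
    · intro e _ he
      simp [he]
  rw [← hl, key]
  refine Finset.sum_bij' (fun G _ => G.edgeFinset)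
    (fun A _ => SimpleGraph.fromEdgeSet (A : Set (Sym2 V))) ?_ ?_ ?_ ?_ ?_
  · intro G _
    simpa only [Finset.mem_powerset] using SimpleGraph.edgeFinset_mono le_top
  · simp
  · intro G _
    simp
  · intro A hA
    rw [Finset.mem_powerset] at hA
    ext e
    simp only [SimpleGraph.mem_edgeFinset, SimpleGraph.edgeSet_fromEdgeSet, Set.mem_sdiff,
      Finset.mem_coe]
    refine ⟨fun h => h.1, fun h => ⟨h, ?_⟩⟩
    have := hA h
    simpa [SimpleGraph.edgeSet_top] using this
  · intro G _
    have hsub : G.edgeFinset ⊆ (⊤ : SimpleGraph V).edgeFinset :=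
      SimpleGraph.edgeFinset_mono le_top
    have hc : G.edgeSet.ncard = G.edgeFinset.card := by
      rw [Set.ncard_eq_toFinset_card']; rfl
    rw [Finset.prod_mul_distrib, Finset.prod_ite, gnpWeight, hc, Finset.prod_const,
      Finset.prod_const, Finset.prod_const, Finset.prod_const, Finset.card_sdiff_of_subset hsub,
      SimpleGraph.card_edgeFinset_top_eq_card_choose_two, Finset.filter_mem_eq_inter]
    ring

lemma card_pairsIn {V : Type} [DecidableEq V] (Y : Finset V) :
    (pairsIn Y).card = Y.card.choose 2 := by
  unfold pairsIn
  exact Sym2.card_image_offDiag Y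

lemma pairsIn_subset {V : Type} [Fintype V] [DecidableEq V] (Y : Finset V) :
    pairsIn Y ⊆ (⊤ : SimpleGraph V).edgeFinset := by
  intro e he
  obtain ⟨⟨a, b⟩, hab, rfl⟩ := Finset.mem_image.1 he
  simp [(Finset.mem_offDiag.1 hab).2.2]

/-- A set `X` violating expansion yields a dense set of `G`, namely `Y = X ∪ N_{G'}(X)`: it has at
most `3 |X|` vertices, and every edge of `G'` meeting `X` lies inside `Y`, which gives at least
`|X| d / 2 ≥ |Y| d / 6` edges. -/
lemma exists_dense_of_not_expands {V : Type} [Fintype V] [DecidableEq V] (G G' : SimpleGraph V)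
    (hle : G' ≤ G) (d : ℝ) (hd : 0 ≤ d)
    (hdeg : ∀ v, d ≤ ((G'.neighborSet v).ncard : ℝ)) (X : Finset V)
    (hX : ((setNbhd G' X \ (X : Set V)).ncard : ℝ) < 2 * X.card) :
    ∃ Y : Finset V, Y.Nonempty ∧ Y.card ≤ 3 * X.card ∧
      Y.card * d / 6 ≤ ((G.edgeFinset ∩ pairsIn Y).card : ℝ) := by
  set Y : Finset V := X ∪ (setNbhd G' X \ (X : Set V)).toFinset with hY
  have hcard : Y.card ≤ 3 * X.card := by
    have h1 : Y.card ≤ X.card + (setNbhd G' X \ (X : Set V)).toFinset.card :=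
      Finset.card_union_le _ _
    rw [← Set.ncard_eq_toFinset_card'] at h1
    have h2 : (setNbhd G' X \ (X : Set V)).ncard < 2 * X.card := by exact_mod_cast hX
    omega
  have hXne : X.Nonempty := by
    rw [Finset.nonempty_iff_ne_empty]
    rintro rfl
    simp at hX
    exact absurd hX (not_lt.2 (Nat.cast_nonneg _))
  refine ⟨Y, hXne.mono Finset.subset_union_left, hcard, ?_⟩
  -- `H` is the part of `G` inside `Y`; it contains every edge of `G'` that meets `X`.
  let H : SimpleGraph V :=
    { Adj := fun u v => G.Adj u v ∧ u ∈ Y ∧ v ∈ Y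
      symm := ⟨fun u v h => ⟨h.1.symm, h.2.2, h.2.1⟩⟩
      loopless := ⟨fun u h => G.loopless.irrefl u h.1⟩ }
  have hHE : H.edgeFinset ⊆ G.edgeFinset ∩ pairsIn Y := by
    intro e
    induction e with
    | _ u v =>
      intro h
      rw [SimpleGraph.mem_edgeFinset, SimpleGraph.mem_edgeSet] at h
      rw [Finset.mem_inter, SimpleGraph.mem_edgeFinset, SimpleGraph.mem_edgeSet]
      refine ⟨h.1, Finset.mem_image.2 ⟨(u, v), ?_, rfl⟩⟩
      exact Finset.mem_offDiag.2 ⟨h.2.1, h.2.2, h.1.ne⟩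
  have hHdeg : ∀ v ∈ X, d ≤ (H.degree v : ℝ) := by
    intro v hv
    refine (hdeg v).trans ?_
    rw [← SimpleGraph.card_neighborSet_eq_degree, ← Set.toFinset_card, ← Set.ncard_eq_toFinset_card']
    refine Nat.cast_le.2 (Set.ncard_le_ncard ?_ (Set.toFinite _))
    intro u hu
    refine ⟨hle hu, Finset.mem_union_left _ hv, ?_⟩
    by_cases huX : u ∈ X
    · exact Finset.mem_union_left _ huX
    · refine Finset.mem_union_right _ ?_
      rw [Set.mem_toFinset]
      exact ⟨⟨v, hv, hu⟩, huX⟩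
  have hsum : (X.card : ℝ) * d ≤ 2 * ((G.edgeFinset ∩ pairsIn Y).card : ℝ) := by
    calc (X.card : ℝ) * d = ∑ _v ∈ X, d := by simp
      _ ≤ ∑ v ∈ X, (H.degree v : ℝ) := Finset.sum_le_sum hHdeg
      _ ≤ ∑ v, (H.degree v : ℝ) :=
        Finset.sum_le_sum_of_subset_of_nonneg (Finset.subset_univ _) (fun _ _ _ => by positivity)
      _ = 2 * (H.edgeFinset.card : ℝ) := by exact_mod_cast H.sum_degrees_eq_twice_card_edges
      _ ≤ _ := by gcongr
  have : (Y.card : ℝ) ≤ 3 * X.card := by exact_mod_cast hcard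
  nlinarith


lemma sum_gnpWeight {V : Type} [Fintype V] [DecidableEq V] (p : ℝ) :
    ∑ G : SimpleGraph V, gnpWeight p G = 1 := by
  simpa using sum_weight_mul_pow (V := V) p 1 ∅ (Finset.empty_subset _)

lemma gnpWeight_nonneg {V : Type} [Fintype V] {p : ℝ} (hp0 : 0 ≤ p) (hp1 : p ≤ 1)
    (G : SimpleGraph V) : 0 ≤ gnpWeight p G :=
  mul_nonneg (pow_nonneg hp0 _) (pow_nonneg (sub_nonneg.2 hp1) _)

lemma gnpProb_le_one {V : Type} [Fintype V] [DecidableEq V] {p : ℝ} (hp0 : 0 ≤ p) (hp1 : p ≤ 1)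
    (P : SimpleGraph V → Prop) : gnpProb V p P ≤ 1 := by
  rw [← sum_gnpWeight (V := V) p, gnpProb]
  refine Finset.sum_le_sum fun G _ => ?_
  split_ifs
  · exact le_rfl
  · exact gnpWeight_nonneg hp0 hp1 G

/-- Markov's inequality applied to `2 ^ e(Y)` for a single vertex set `Y`: with `k = |Y| d / 6`,
the weighted sum of `2 ^ (e(Y) - k)` is at most `exp (9 k / 80 - k log 2) ≤ exp (-k / 2)`. -/
lemma sum_weight_mul_exp_le {V : Type} [Fintype V] [DecidableEq V] {p d b : ℝ} (hp0 : 0 ≤ p)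
    (hd : 0 ≤ d) (hpb : p * b ≤ 3 * d / 80) (Y : Finset V) (hY : (Y.card : ℝ) ≤ b) :
    ∑ G : SimpleGraph V, gnpWeight p G *
      (2 ^ (G.edgeFinset ∩ pairsIn Y).card * Real.exp (-(Real.log 2 * (Y.card * d / 6))))
      ≤ Real.exp (-(d / 12)) ^ Y.card := by
  simp_rw [← mul_assoc]
  rw [← Finset.sum_mul, sum_weight_mul_pow p 2 _ (pairsIn_subset Y), card_pairsIn]
  have h1 : (1 + (2 - 1) * p) ^ (Y.card.choose 2) ≤ Real.exp (p * (Y.card.choose 2 : ℕ)) := by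
    rw [mul_comm p, Real.exp_nat_mul]
    refine pow_le_pow_left₀ (by linarith) ?_ _
    linarith [Real.add_one_le_exp p]
  have h2 : p * (Y.card.choose 2 : ℕ) ≤ 3 * d / 160 * Y.card := by
    have hy : (0 : ℝ) ≤ Y.card := Nat.cast_nonneg _
    have h3 : ((Y.card.choose 2 : ℕ) : ℝ) ≤ Y.card * b / 2 := by
      rw [Nat.cast_choose_two]
      nlinarith
    have h4 := mul_le_mul_of_nonneg_left h3 hp0
    have h5 := mul_le_mul_of_nonneg_left hpb hy
    linarith
  have hlog := Real.log_two_gt_d9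
  rw [← Real.exp_nat_mul]
  calc _ ≤ Real.exp (3 * d / 160 * Y.card) * Real.exp (-(Real.log 2 * (Y.card * d / 6))) := by
        gcongr
        exact h1.trans (Real.exp_le_exp.2 h2)
    _ ≤ _ := by
        rw [← Real.exp_add]
        refine Real.exp_le_exp.2 ?_
        have : 0 ≤ (Y.card : ℝ) * d := by positivity
        nlinarith

/-- The union bound over all vertex sets `Y`, in the form `∑ q ^ |Y| = (1 + q) ^ n ≤ exp (n q)`
with `q = exp (-d / 12)`; the empty set is excluded, which accounts for the `1` subtracted from
the exponential. -/
lemma le_gnpProb_of_dense {V : Type} [Fintype V] [DecidableEq V] {p d b : ℝ} (hp0 : 0 ≤ p)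
    (hp1 : p ≤ 1) (hd : 0 ≤ d) (hpb : p * b ≤ 3 * d / 80) (P : SimpleGraph V → Prop)
    (hP : ∀ G, ¬ P G → ∃ Y : Finset V, Y.Nonempty ∧ (Y.card : ℝ) ≤ b ∧
      Y.card * d / 6 ≤ ((G.edgeFinset ∩ pairsIn Y).card : ℝ)) :
    1 - (Real.exp (Fintype.card V * Real.exp (-(d / 12))) - 1) ≤ gnpProb V p P := by
  set F : Finset (Finset V) := Finset.univ.filter fun Y => Y.Nonempty ∧ (Y.card : ℝ) ≤ b with hF
  set q := Real.exp (-(d / 12)) with hq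
  have hq0 : 0 < q := Real.exp_pos _
  have hpt : ∀ G : SimpleGraph V, gnpWeight p G ≤ (if P G then gnpWeight p G else 0) +
      ∑ Y ∈ F, gnpWeight p G * (2 ^ (G.edgeFinset ∩ pairsIn Y).card *
        Real.exp (-(Real.log 2 * (Y.card * d / 6)))) := by
    intro G
    have hw := gnpWeight_nonneg hp0 hp1 G
    have hnn : ∀ Y ∈ F, 0 ≤ gnpWeight p G * (2 ^ (G.edgeFinset ∩ pairsIn Y).card *
        Real.exp (-(Real.log 2 * (Y.card * d / 6)))) := fun Y _ => by positivity
    split_ifs with h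
    · linarith [Finset.sum_nonneg hnn]
    · obtain ⟨Y, hne, hYb, hYe⟩ := hP G h
      have hYF : Y ∈ F := by simp [hF, hne, hYb]
      refine le_trans ?_ ((Finset.single_le_sum hnn hYF).trans_eq (zero_add _).symm)
      refine le_mul_of_one_le_right hw ?_
      rw [← Real.exp_log (show (0 : ℝ) < 2 by norm_num), ← Real.exp_nat_mul, ← Real.exp_add,
        Real.exp_log (show (0 : ℝ) < 2 by norm_num)]
      refine Real.one_le_exp ?_
      have : 0 < Real.log 2 := Real.log_pos (by norm_num)
      nlinarith
  have hsum := Finset.sum_le_sum fun G (_ : G ∈ Finset.univ) => hpt G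
  rw [sum_gnpWeight, Finset.sum_add_distrib, Finset.sum_comm] at hsum
  have hY : ∑ Y ∈ F, ∑ G : SimpleGraph V, gnpWeight p G *
      (2 ^ (G.edgeFinset ∩ pairsIn Y).card * Real.exp (-(Real.log 2 * (Y.card * d / 6))))
      ≤ ∑ Y ∈ F, q ^ Y.card := by
    refine Finset.sum_le_sum fun Y hYF => sum_weight_mul_exp_le hp0 hd hpb Y ?_
    exact (Finset.mem_filter.1 hYF).2.2
  have hF1 : 1 + ∑ Y ∈ F, q ^ Y.card ≤ (1 + q) ^ Fintype.card V := by
    have hall : ∑ Y : Finset V, q ^ Y.card = (1 + q) ^ Fintype.card V := by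
      have := Fintype.prod_add (fun _ : V => q) (fun _ => 1)
      simp only [Finset.prod_const, one_pow, mul_one, Finset.card_univ] at this
      rw [← this, add_comm]
    have hnot : (∅ : Finset V) ∉ F := by simp [hF]
    rw [← hall]
    calc 1 + ∑ Y ∈ F, q ^ Y.card = ∑ Y ∈ insert ∅ F, q ^ Y.card := by
          rw [Finset.sum_insert hnot]; simp
      _ ≤ _ := Finset.sum_le_sum_of_subset_of_nonneg (Finset.subset_univ _)
          fun _ _ _ => by positivity
  have hexp : (1 + q) ^ Fintype.card V ≤ Real.exp (Fintype.card V * q) := by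
    rw [Real.exp_nat_mul]
    refine pow_le_pow_left₀ (by positivity) ?_ _
    linarith [Real.add_one_le_exp q]
  have hg : ∑ G : SimpleGraph V, (if P G then gnpWeight p G else 0) = gnpProb V p P := rfl
  rw [hg] at hsum
  linarith

lemma mul_rpow_neg_half {n : ℕ} (hn : 0 < n) :
    (n : ℝ) * (n : ℝ) ^ (-(1/2) : ℝ) = Real.sqrt n := by
  have h : (0 : ℝ) < n := by exact_mod_cast hn
  rw [Real.sqrt_eq_rpow]
  nth_rw 1 [← Real.rpow_one (n : ℝ)]
  rw [← Real.rpow_add h]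
  norm_num

lemma tendsto_failure_bound {c : ℝ} (hc : 0 < c) :
    Tendsto (fun n : ℕ => 1 - (Real.exp (n * Real.exp (-(c * Real.sqrt n))) - 1)) atTop (𝓝 1) := by
  have hs : Tendsto (fun n : ℕ => c * Real.sqrt n) atTop atTop :=
    (Real.tendsto_sqrt_atTop.comp tendsto_natCast_atTop_atTop).const_mul_atTop hc
  have h := ((Real.tendsto_pow_mul_exp_neg_atTop_nhds_zero 2).comp hs).const_mul ((c ^ 2)⁻¹)
  have h' : Tendsto (fun n : ℕ => (n : ℝ) * Real.exp (-(c * Real.sqrt n))) atTop (𝓝 0) := by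
    rw [mul_zero] at h
    refine h.congr fun n => ?_
    simp only [Function.comp, mul_pow, Real.sq_sqrt (Nat.cast_nonneg n)]
    field_simp
  have := ((Real.continuous_exp.tendsto 0).comp h').sub_const 1 |>.const_sub 1
  simpa using this

/-- Expansion lemma: if p = C·n^(-1/2) with C > 0 and ε' > 0, then a.a.s. every subgraph G'
of G(n,p) with minimum degree at least ε'np satisfies: every vertex set X with
|X| ≤ (ε'/80)n has |N_{G'}(X) ∖ X| ≥ 2|X|. -/
theorem min_degree_subgraph_expands (C : ℝ) (hC : 0 < C) (ε' : ℝ) (hε' : 0 < ε') :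
    Filter.Tendsto
      (fun n : ℕ =>
        gnpProb (Fin n) (C * (n : ℝ) ^ (-(1/2) : ℝ)) (fun G =>
          ∀ G' : SimpleGraph (Fin n), G' ≤ G →
            (∀ v : Fin n,
              ε' * n * (C * (n : ℝ) ^ (-(1/2) : ℝ)) ≤ ((G'.neighborSet v).ncard : ℝ)) →
            ∀ X : Finset (Fin n), (X.card : ℝ) ≤ ε' / 80 * n →
              2 * (X.card : ℝ) ≤ ((setNbhd G' X \ (X : Set (Fin n))).ncard : ℝ)))
      Filter.atTop (nhds 1) := by
  have hp : Tendsto (fun n : ℕ => C * (n : ℝ) ^ (-(1/2) : ℝ)) atTop (𝓝 0) := by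
    have := ((tendsto_rpow_neg_atTop (show (0 : ℝ) < 1 / 2 by norm_num)).comp
      tendsto_natCast_atTop_atTop).const_mul C
    rw [mul_zero] at this
    exact this
  have hp1 : ∀ᶠ n : ℕ in atTop, C * (n : ℝ) ^ (-(1/2) : ℝ) ≤ 1 :=
    hp.eventually_le_const one_pos
  have hp0 : ∀ n : ℕ, 0 ≤ C * (n : ℝ) ^ (-(1/2) : ℝ) := fun n => by positivity
  refine tendsto_of_tendsto_of_tendsto_of_le_of_le'
    (tendsto_failure_bound (show 0 < ε' * C / 12 by positivity)) tendsto_const_nhds ?_ ?_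
  · filter_upwards [hp1, eventually_gt_atTop 0] with n hn1 hn0
    have hd0 : 0 ≤ ε' * n * (C * (n : ℝ) ^ (-(1/2) : ℝ)) :=
      mul_nonneg (by positivity) (hp0 n)
    have hd : ε' * C / 12 * Real.sqrt n = ε' * n * (C * (n : ℝ) ^ (-(1/2) : ℝ)) / 12 := by
      rw [← mul_rpow_neg_half hn0]; ring
    have hmain := fun P hP => le_gnpProb_of_dense (V := Fin n) (hp0 n) hn1 hd0
      (b := 3 * (ε' / 80 * n)) (le_of_eq (by ring)) P hP
    rw [hd]
    rw [Fintype.card_fin] at hmain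
    refine hmain _ fun G hG => ?_
    push Not at hG
    obtain ⟨G', hle, hdeg, X, hXn, hX⟩ := hG
    obtain ⟨Y, hne, hYX, hYe⟩ := exists_dense_of_not_expands G G' hle _ hd0 hdeg X hX
    have hYX' : (Y.card : ℝ) ≤ 3 * X.card := by exact_mod_cast hYX
    exact ⟨Y, hne, by linarith, hYe⟩
  · filter_upwards [hp1] with n hn1
    exact gnpProb_le_one (hp0 n) hn1 _
end

section
/- For every integer l with 0 ≤ l ≤ n/2 and every l-shortcut X in K_n ∖ C_n, the graph C_n ∪ X contains a cycle of length l + 8 and a cycle of length n − l. -/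
/-!
Measure positions clockwise from `i₁`, so that `i₁` itself gets position `n`, `i₁ + 1` gets
position `1`, and every vertex has a unique position in `[1, n]`. Write `a`, `b`, `c` for the
positions of `i₂`, `i₃`, `i₄`.

The cycle of length `l + 8` uses the four edges of the shortcut, the three edges `{iⱼ, iⱼ + 1}`
with `j ≤ 3`, and the whole arc from `i₄` to `i₄ + l + 1`:
`i₁, i₁+1, i₄, …, i₄+l+1, i₂, i₂+1, i₃+1, i₃`.

The cycle of length `n - l` leaves out exactly the `l` inner vertices of that arc. For type (i) it
is `i₁+1 ⟶ i₂, i₄+l+1 ⟶ i₁, i₃ ⟵ i₂+1, i₃+1 ⟶ i₄`, and for type (ii) it is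
`i₁+1 ⟶ i₂, i₄+l+1 ⟶ i₃, i₁ ⟵ i₃+1, i₂+1 ⟶ i₄`; arrows stand for the arcs of `C_n`, a left
arrow being a counterclockwise one, and commas for shortcut edges.

Each cycle is given by a piecewise linear sequence of positions, so that injectivity and adjacency
of consecutive terms become linear arithmetic (`hasCycleLength_of_pos`, resting on
`hasCycleLength_of_seq`).
-/

open Filter Topology Classical

/-- The clockwise arc length from `a` to `b` on the discrete circle `ZMod n`. -/
def arcDist {n : ℕ} (a b : ZMod n) : ℕ := (b - a).val

/-- The points of `L` are all distinct and lie in this clockwise cyclic order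
on the discrete circle `ZMod n` (the consecutive clockwise arcs, including the
wrap-around arc, sum to exactly `n`). -/
def InClockwiseOrder {n : ℕ} (L : List (ZMod n)) : Prop :=
  L.Nodup ∧ ((L.zip (L.rotate 1)).map fun q => arcDist q.1 q.2).sum = n

/-- The Hamilton cycle `C_n` on vertex set `ZMod n`, with edges `{i, i+1}`. -/
def cycleGraph (n : ℕ) : SimpleGraph (ZMod n) :=
  SimpleGraph.fromEdgeSet {e | ∃ i : ZMod n, e = s(i, i + 1)}

/-- The four edges of the `l`-shortcut determined by `i₁ i₂ i₃ i₄`. -/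
def shortcutEdges {n : ℕ} (l : ℕ) (i₁ i₂ i₃ i₄ : ZMod n) : Finset (Sym2 (ZMod n)) :=
  {s(i₁, i₃), s(i₁ + 1, i₄), s(i₂, i₄ + (l : ZMod n) + 1), s(i₂ + 1, i₃ + 1)}

/-- `(i₁, i₂, i₃, i₄)` determines an `l`-shortcut (of type (i) or type (ii)) in `K_n ∖ C_n`. -/
def IsShortcutTuple {n : ℕ} (l : ℕ) (i₁ i₂ i₃ i₄ : ZMod n) : Prop :=
  (InClockwiseOrder [i₁, i₁ + 1, i₂, i₂ + 1, i₃, i₃ + 1, i₄, i₄ + (l : ZMod n) + 1] ∨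
   InClockwiseOrder [i₁, i₁ + 1, i₂, i₂ + 1, i₄, i₄ + (l : ZMod n) + 1, i₃, i₃ + 1]) ∧
  ∀ e ∈ shortcutEdges l i₁ i₂ i₃ i₄, e ∉ (cycleGraph n).edgeSet

/-- The edge set `S` is an `l`-shortcut. -/
def IsShortcut {n : ℕ} (l : ℕ) (S : Finset (Sym2 (ZMod n))) : Prop :=
  ∃ i₁ i₂ i₃ i₄ : ZMod n, IsShortcutTuple l i₁ i₂ i₃ i₄ ∧ S = shortcutEdges l i₁ i₂ i₃ i₄

/-- The number of `l`-shortcuts all of whose edges belong to the edge set `U`. -/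
noncomputable def shortcutCountIn {n : ℕ} (l : ℕ) (U : Set (Sym2 (ZMod n))) : ℕ :=
  {S : Finset (Sym2 (ZMod n)) | IsShortcut l S ∧ (S : Set (Sym2 (ZMod n))) ⊆ U}.ncard

/-- `G` contains an `l`-shortcut. -/
def ContainsShortcut {n : ℕ} (l : ℕ) (G : SimpleGraph (ZMod n)) : Prop :=
  ∃ i₁ i₂ i₃ i₄ : ZMod n, IsShortcutTuple l i₁ i₂ i₃ i₄ ∧
    (shortcutEdges l i₁ i₂ i₃ i₄ : Set (Sym2 (ZMod n))) ⊆ G.edgeSet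

/-- `G` contains a cycle of length `t`. -/
def HasCycleLength {V : Type} (G : SimpleGraph V) (t : ℕ) : Prop :=
  ∃ (v : V) (w : G.Walk v v), w.IsCycle ∧ w.length = t

/-! ### Cycles from cyclic sequences -/

/-- An injective sequence `g 0, …, g (t - 1)` with consecutive terms adjacent, cyclically, is a
cycle of length `t`. -/
lemma hasCycleLength_of_seq {V : Type} (G : SimpleGraph V) (t : ℕ) (ht : 3 ≤ t) (g : ℕ → V)
    (inj : ∀ i j, i < t → j < t → g i = g j → i = j)
    (adj : ∀ i, i + 1 < t → G.Adj (g i) (g (i + 1)))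
    (close : G.Adj (g 0) (g (t - 1))) : HasCycleLength G t := by
  have key : ∀ m, m < t → ∃ w : G.Walk (g m) (g 0), w.IsPath ∧ w.length = m ∧
      (∀ v ∈ w.support, ∃ i ≤ m, v = g i) ∧
      (∀ e ∈ w.edges, ∃ i < m, e = s(g i, g (i + 1))) := by
    intro m
    induction m with
    | zero =>
      intro _
      exact ⟨SimpleGraph.Walk.nil, by simp⟩
    | succ m ih =>
      intro hm
      obtain ⟨w, hp, hlen, hs, he⟩ := ih (by omega)
      refine ⟨SimpleGraph.Walk.cons (adj m hm).symm w, ?_, ?_, ?_, ?_⟩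
      · rw [SimpleGraph.Walk.cons_isPath_iff]
        refine ⟨hp, fun hmem => ?_⟩
        obtain ⟨i, hi, h⟩ := hs _ hmem
        have := inj _ _ hm (by omega) h
        omega
      · simp [hlen]
      · intro v hv
        rw [SimpleGraph.Walk.support_cons, List.mem_cons] at hv
        rcases hv with rfl | hv
        · exact ⟨m + 1, le_rfl, rfl⟩
        · obtain ⟨i, hi, h⟩ := hs _ hv
          exact ⟨i, by omega, h⟩
      · intro e hv
        rw [SimpleGraph.Walk.edges_cons, List.mem_cons] at hv
        rcases hv with rfl | hv
        · exact ⟨m, by omega, Sym2.eq_swap⟩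
        · obtain ⟨i, hi, h⟩ := he _ hv
          exact ⟨i, by omega, h⟩
  obtain ⟨w, hp, hlen, -, he⟩ := key (t - 1) (by omega)
  refine ⟨g 0, SimpleGraph.Walk.cons close w, ?_, ?_⟩
  · rw [SimpleGraph.Walk.cons_isCycle_iff]
    refine ⟨hp, fun hmem => ?_⟩
    obtain ⟨i, hi, h⟩ := he _ hmem
    rw [Sym2.eq_iff] at h
    rcases h with ⟨h1, h2⟩ | ⟨h1, h2⟩
    · have := inj _ _ (by omega) (by omega) h1
      have := inj _ _ (by omega) (by omega) h2
      omega
    · have := inj _ _ (by omega) (by omega) h1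
      omega
  · simp [hlen]
    omega

lemma add_cast_inj {n : ℕ} (x : ZMod n) {i j : ℕ} (hi : 1 ≤ i) (hi' : i ≤ n) (hj : 1 ≤ j)
    (hj' : j ≤ n) (h : x + (i : ZMod n) = x + (j : ZMod n)) : i = j := by
  have h := add_left_cancel h
  rw [ZMod.natCast_eq_natCast_iff] at h
  have h2 : (i : ℤ) ≡ j [ZMOD n] := (Int.natCast_modEq_iff).2 h
  obtain ⟨k, hk⟩ := h2.dvd
  have h3 : k < 1 := by nlinarith
  have h4 : -1 < k := by nlinarith
  have : k = 0 := by omega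
  subst this
  omega

/-- A cycle described by positions `p 0, …, p (t - 1)` in `[1, n]`, measured clockwise from `x`,
where each step changes the position by one or follows a pair of `R`. -/
lemma hasCycleLength_of_pos {n : ℕ} (hn : 2 ≤ n) (G : SimpleGraph (ZMod n))
    (hG : cycleGraph n ≤ G) (x : ZMod n) (R : ℕ → ℕ → Prop)
    (hR : ∀ u v, R u v → G.Adj (x + (u : ZMod n)) (x + (v : ZMod n)))
    (t : ℕ) (ht : 3 ≤ t) (p : ℕ → ℕ) (hp : ∀ i, i < t → 1 ≤ p i ∧ p i ≤ n)
    (inj : ∀ i j, i < t → j < t → p i = p j → i = j)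
    (adj : ∀ i, i + 1 < t → p (i + 1) = p i + 1 ∨ p i = p (i + 1) + 1 ∨
      R (p i) (p (i + 1)) ∨ R (p (i + 1)) (p i))
    (close : R (p 0) (p (t - 1)) ∨ R (p (t - 1)) (p 0)) : HasCycleLength G t := by
  have step : ∀ u : ℕ, G.Adj (x + (u : ZMod n)) (x + ((u + 1 : ℕ) : ZMod n)) := by
    intro u
    apply hG
    rw [cycleGraph, SimpleGraph.fromEdgeSet_adj]
    refine ⟨⟨x + u, by push_cast; rw [add_assoc]⟩, ?_⟩
    have : Fact (1 < n) := ⟨by omega⟩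
    push_cast
    rw [← add_assoc]
    simp
  apply hasCycleLength_of_seq G t ht (fun i => x + (p i : ZMod n))
  · intro i j hi hj h
    exact inj i j hi hj (add_cast_inj x (hp i hi).1 (hp i hi).2 (hp j hj).1 (hp j hj).2 h)
  · intro i hi
    rcases adj i hi with h | h | h | h
    · simp only [h]; exact step _
    · simp only [h]; exact (step _).symm
    · exact hR _ _ h
    · exact (hR _ _ h).symm
  · rcases close with h | h
    · exact hR _ _ h
    · exact (hR _ _ h).symm

/-! ### Positions of the ends of the shortcut -/

/-- The shortcut edges in terms of positions, where `a`, `b`, `c` are those of `i₂`, `i₃`, `i₄`,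
together with the edge `{i₁, i₁ + 1}` of `C_n`, whose ends have the positions `n` and `1`. -/
def posRel (n l a b c u v : ℕ) : Prop :=
  (u = n ∧ v = b) ∨ (u = 1 ∧ v = c) ∨ (u = a ∧ v = c + l + 1) ∨ (u = a + 1 ∧ v = b + 1) ∨
    (u = n ∧ v = 1)

lemma arcDist_pos {n : ℕ} [NeZero n] {x y : ZMod n} (h : x ≠ y) : 1 ≤ arcDist x y := by
  rw [Nat.one_le_iff_ne_zero, arcDist, Ne, ZMod.val_eq_zero, sub_eq_zero]
  exact fun e => h e.symm

/-- The clockwise order of type (i) or (ii), in terms of positions relative to `i₁`. -/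
lemma exists_positions {n l : ℕ} (hl : 2 * l ≤ n) {i₁ i₂ i₃ i₄ : ZMod n}
    (h : IsShortcutTuple l i₁ i₂ i₃ i₄) : ∃ a b c : ℕ,
      i₂ = i₁ + (a : ZMod n) ∧ i₃ = i₁ + (b : ZMod n) ∧ i₄ = i₁ + (c : ZMod n) ∧ 2 ≤ a ∧
      ((a + 2 ≤ b ∧ b + 2 ≤ c ∧ c + l + 2 ≤ n) ∨ (a + 2 ≤ c ∧ c + l + 2 ≤ b ∧ b + 2 ≤ n)) := by
  rcases Nat.eq_zero_or_pos n with rfl | hn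
  · exfalso
    have e1 : arcDist i₁ (i₁ + 1) = 1 := by
      unfold arcDist
      rw [add_sub_cancel_left]
      rfl
    rcases h.1 with ⟨-, hsum⟩ | ⟨-, hsum⟩ <;>
    · simp [e1] at hsum
  have : NeZero n := ⟨by omega⟩
  have one : ∀ x y : ZMod n, x ≠ y → 1 ≤ arcDist x y := fun x y => arcDist_pos
  have e1 : 2 ≤ n → ∀ x : ZMod n, arcDist x (x + 1) = 1 := by
    intro h2 x
    have : Fact (1 < n) := ⟨by omega⟩
    simp [arcDist, ZMod.val_one]
  have e2 : l + 1 < n → ∀ x : ZMod n, arcDist x (x + (l : ZMod n) + 1) = l + 1 := by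
    intro h2 x
    have : x + (l : ZMod n) + 1 - x = ((l + 1 : ℕ) : ZMod n) := by push_cast; ring
    rw [arcDist, this, ZMod.val_natCast_of_lt h2]
  rcases h.1 with ⟨hnd, hsum⟩ | ⟨hnd, hsum⟩
  · simp only [List.nodup_cons, List.mem_cons, not_or] at hnd
    simp only [List.rotate_cons_succ, List.rotate_zero, List.cons_append, List.nil_append,
      List.zip_cons_cons, List.zip_nil_left, List.map_cons, List.map_nil, List.sum_cons,
      List.sum_nil] at hsum
    have p1 := one _ _ hnd.1.1
    have p2 := one _ _ hnd.2.1.1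
    have p3 := one _ _ hnd.2.2.1.1
    have p4 := one _ _ hnd.2.2.2.1.1
    have p5 := one _ _ hnd.2.2.2.2.1.1
    have p6 := one _ _ hnd.2.2.2.2.2.1.1
    have p7 := one _ _ hnd.2.2.2.2.2.2.1.1
    have p8 := one _ _ (Ne.symm hnd.1.2.2.2.2.2.2.1)
    have e1' := e1 (by omega)
    have e2' := e2 (by omega)
    rw [e1', e1', e1', e2'] at hsum
    refine ⟨1 + arcDist (i₁ + 1) i₂, 1 + arcDist (i₁ + 1) i₂ + 1 + arcDist (i₂ + 1) i₃,
      1 + arcDist (i₁ + 1) i₂ + 1 + arcDist (i₂ + 1) i₃ + 1 + arcDist (i₃ + 1) i₄,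
      ?_, ?_, ?_, by omega, Or.inl (by omega)⟩
    all_goals
      simp only [arcDist, Nat.cast_add, Nat.cast_one, ZMod.natCast_val, ZMod.cast_id', id]
      ring
  · simp only [List.nodup_cons, List.mem_cons, not_or] at hnd
    simp only [List.rotate_cons_succ, List.rotate_zero, List.cons_append, List.nil_append,
      List.zip_cons_cons, List.zip_nil_left, List.map_cons, List.map_nil, List.sum_cons,
      List.sum_nil] at hsum
    have p1 := one _ _ hnd.1.1
    have p2 := one _ _ hnd.2.1.1
    have p3 := one _ _ hnd.2.2.1.1
    have p4 := one _ _ hnd.2.2.2.1.1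
    have p5 := one _ _ hnd.2.2.2.2.1.1
    have p6 := one _ _ hnd.2.2.2.2.2.1.1
    have p7 := one _ _ hnd.2.2.2.2.2.2.1.1
    have p8 := one _ _ (Ne.symm hnd.1.2.2.2.2.2.2.1)
    have e1' := e1 (by omega)
    have e2' := e2 (by omega)
    rw [e1', e1', e1', e2'] at hsum
    refine ⟨1 + arcDist (i₁ + 1) i₂,
      1 + arcDist (i₁ + 1) i₂ + 1 + arcDist (i₂ + 1) i₄ + (l + 1) +
        arcDist (i₄ + (l : ZMod n) + 1) i₃,
      1 + arcDist (i₁ + 1) i₂ + 1 + arcDist (i₂ + 1) i₄,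
      ?_, ?_, ?_, by omega, Or.inr (by omega)⟩
    all_goals
      simp only [arcDist, Nat.cast_add, Nat.cast_one, ZMod.natCast_val, ZMod.cast_id', id]
      ring

/-! ### The cycle of length `l + 8` -/

/-- Positions along the cycle `i₁, i₁+1, i₄, …, i₄+l+1, i₂, i₂+1, i₃+1, i₃`. -/
def shortSeq (n l a b c j : ℕ) : ℕ :=
  if j = 0 then n else if j = 1 then 1 else if j < l + 4 then c + (j - 2)
  else if j = l + 4 then a else if j = l + 5 then a + 1 else if j = l + 6 then b + 1 else b

lemma shortSeq_mem {n l a b c : ℕ} (ha : 2 ≤ a)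
    (habc : (a + 2 ≤ b ∧ b + 2 ≤ c ∧ c + l + 2 ≤ n) ∨ (a + 2 ≤ c ∧ c + l + 2 ≤ b ∧ b + 2 ≤ n))
    (i : ℕ) (hi : i < l + 8) : 1 ≤ shortSeq n l a b c i ∧ shortSeq n l a b c i ≤ n := by
  unfold shortSeq
  split_ifs <;> omega

lemma shortSeq_inj {n l a b c : ℕ} (ha : 2 ≤ a)
    (habc : (a + 2 ≤ b ∧ b + 2 ≤ c ∧ c + l + 2 ≤ n) ∨ (a + 2 ≤ c ∧ c + l + 2 ≤ b ∧ b + 2 ≤ n))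
    (i j : ℕ) (hi : i < l + 8) (hj : j < l + 8)
    (h : shortSeq n l a b c i = shortSeq n l a b c j) : i = j := by
  unfold shortSeq at h
  split_ifs at h <;> omega

lemma shortSeq_adj {n l a b c : ℕ} (ha : 2 ≤ a)
    (i : ℕ) (hi : i + 1 < l + 8) :
    shortSeq n l a b c (i + 1) = shortSeq n l a b c i + 1 ∨
      shortSeq n l a b c i = shortSeq n l a b c (i + 1) + 1 ∨
      posRel n l a b c (shortSeq n l a b c i) (shortSeq n l a b c (i + 1)) ∨
      posRel n l a b c (shortSeq n l a b c (i + 1)) (shortSeq n l a b c i) := by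
  unfold shortSeq posRel
  split_ifs
  all_goals
    first
    | (exfalso; omega)
    | exact Or.inl (by omega)
    | exact Or.inr (Or.inl (by omega))
    | exact Or.inr (Or.inr (Or.inl (by omega)))
    | exact Or.inr (Or.inr (Or.inr (by omega)))

lemma shortSeq_close (n l a b c : ℕ) :
    posRel n l a b c (shortSeq n l a b c 0) (shortSeq n l a b c (l + 8 - 1)) ∨
      posRel n l a b c (shortSeq n l a b c (l + 8 - 1)) (shortSeq n l a b c 0) := by
  refine Or.inl (Or.inl ?_)
  unfold shortSeq
  split_ifs <;> omega

/-! ### The cycles of length `n - l` -/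

/-- Positions along the type (i) cycle `i₁+1 ⟶ i₂, i₄+l+1 ⟶ i₁, i₃ ⟵ i₂+1, i₃+1 ⟶ i₄`. The second
arc has `n - c - l` vertices, and `n - c - l + b` vertices precede `i₃+1`. -/
def longSeq₁ (n l a b c j : ℕ) : ℕ :=
  if j < a then 1 + j else if j < a + (n - c - l) then c + l + 1 + (j - a)
  else if j < n - c - l + b then b - (j - (a + (n - c - l)))
  else b + 1 + (j - (n - c - l + b))

lemma longSeq₁_mem {n l a b c : ℕ} (ha : 2 ≤ a)
    (habc : a + 2 ≤ b ∧ b + 2 ≤ c ∧ c + l + 2 ≤ n)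
    (i : ℕ) (hi : i < n - l) : 1 ≤ longSeq₁ n l a b c i ∧ longSeq₁ n l a b c i ≤ n := by
  unfold longSeq₁
  split_ifs <;> omega

lemma longSeq₁_inj {n l a b c : ℕ} (ha : 2 ≤ a)
    (habc : a + 2 ≤ b ∧ b + 2 ≤ c ∧ c + l + 2 ≤ n)
    (i j : ℕ) (hi : i < n - l) (hj : j < n - l)
    (h : longSeq₁ n l a b c i = longSeq₁ n l a b c j) : i = j := by
  unfold longSeq₁ at h
  split_ifs at h <;> omega

lemma longSeq₁_adj {n l a b c : ℕ} (ha : 2 ≤ a)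
    (habc : a + 2 ≤ b ∧ b + 2 ≤ c ∧ c + l + 2 ≤ n)
    (i : ℕ) :
    longSeq₁ n l a b c (i + 1) = longSeq₁ n l a b c i + 1 ∨
      longSeq₁ n l a b c i = longSeq₁ n l a b c (i + 1) + 1 ∨
      posRel n l a b c (longSeq₁ n l a b c i) (longSeq₁ n l a b c (i + 1)) ∨
      posRel n l a b c (longSeq₁ n l a b c (i + 1)) (longSeq₁ n l a b c i) := by
  unfold longSeq₁ posRel
  split_ifs
  all_goals
    first
    | (exfalso; omega)
    | exact Or.inl (by omega)
    | exact Or.inr (Or.inl (by omega))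
    | exact Or.inr (Or.inr (Or.inl (by omega)))

lemma longSeq₁_close {n l a b c : ℕ} (ha : 2 ≤ a)
    (habc : a + 2 ≤ b ∧ b + 2 ≤ c ∧ c + l + 2 ≤ n) :
    posRel n l a b c (longSeq₁ n l a b c 0) (longSeq₁ n l a b c (n - l - 1)) ∨
      posRel n l a b c (longSeq₁ n l a b c (n - l - 1)) (longSeq₁ n l a b c 0) := by
  refine Or.inl (Or.inr (Or.inl ?_))
  unfold longSeq₁
  split_ifs <;> omega

/-- Positions along the type (ii) cycle `i₁+1 ⟶ i₂, i₄+l+1 ⟶ i₃, i₁ ⟵ i₃+1, i₂+1 ⟶ i₄`. The second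
arc has `b - c - l` vertices and the third `n - b`. -/
def longSeq₂ (n l a b c j : ℕ) : ℕ :=
  if j < a then 1 + j else if j < a + (b - c - l) then c + l + 1 + (j - a)
  else if j < a + (b - c - l) + (n - b) then n - (j - (a + (b - c - l)))
  else a + 1 + (j - (a + (b - c - l) + (n - b)))

lemma longSeq₂_mem {n l a b c : ℕ} (ha : 2 ≤ a)
    (habc : a + 2 ≤ c ∧ c + l + 2 ≤ b ∧ b + 2 ≤ n)
    (i : ℕ) (hi : i < n - l) : 1 ≤ longSeq₂ n l a b c i ∧ longSeq₂ n l a b c i ≤ n := by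
  unfold longSeq₂
  split_ifs <;> omega

lemma longSeq₂_inj {n l a b c : ℕ} (ha : 2 ≤ a)
    (habc : a + 2 ≤ c ∧ c + l + 2 ≤ b ∧ b + 2 ≤ n)
    (i j : ℕ) (hi : i < n - l) (hj : j < n - l)
    (h : longSeq₂ n l a b c i = longSeq₂ n l a b c j) : i = j := by
  unfold longSeq₂ at h
  split_ifs at h <;> omega

lemma longSeq₂_adj {n l a b c : ℕ} (ha : 2 ≤ a)
    (habc : a + 2 ≤ c ∧ c + l + 2 ≤ b ∧ b + 2 ≤ n)
    (i : ℕ) :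
    longSeq₂ n l a b c (i + 1) = longSeq₂ n l a b c i + 1 ∨
      longSeq₂ n l a b c i = longSeq₂ n l a b c (i + 1) + 1 ∨
      posRel n l a b c (longSeq₂ n l a b c i) (longSeq₂ n l a b c (i + 1)) ∨
      posRel n l a b c (longSeq₂ n l a b c (i + 1)) (longSeq₂ n l a b c i) := by
  unfold longSeq₂ posRel
  split_ifs
  all_goals
    first
    | (exfalso; omega)
    | exact Or.inl (by omega)
    | exact Or.inr (Or.inl (by omega))
    | exact Or.inr (Or.inr (Or.inl (by omega)))
    | exact Or.inr (Or.inr (Or.inr (by omega)))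

lemma longSeq₂_close {n l a b c : ℕ} (ha : 2 ≤ a)
    (habc : a + 2 ≤ c ∧ c + l + 2 ≤ b ∧ b + 2 ≤ n) :
    posRel n l a b c (longSeq₂ n l a b c 0) (longSeq₂ n l a b c (n - l - 1)) ∨
      posRel n l a b c (longSeq₂ n l a b c (n - l - 1)) (longSeq₂ n l a b c 0) := by
  refine Or.inl (Or.inr (Or.inl ?_))
  unfold longSeq₂
  split_ifs <;> omega

/-! ### Both cycle lengths in the union with a shortcut -/

/-- For every `l` with `0 ≤ l ≤ n/2` and every `l`-shortcut `X` in `K_n ∖ C_n`, the graph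
`C_n ∪ X` contains a cycle of length `l + 8` and a cycle of length `n − l`. -/
theorem shortcut_gives_cycles (n l : ℕ) (hl : 2 * l ≤ n)
    (S : Finset (Sym2 (ZMod n))) (hS : IsShortcut l S) :
    HasCycleLength (cycleGraph n ⊔ SimpleGraph.fromEdgeSet (S : Set (Sym2 (ZMod n)))) (l + 8) ∧
    HasCycleLength (cycleGraph n ⊔ SimpleGraph.fromEdgeSet (S : Set (Sym2 (ZMod n)))) (n - l) := by
  obtain ⟨i₁, i₂, i₃, i₄, h, rfl⟩ := hS
  obtain ⟨a, b, c, rfl, rfl, rfl, ha, habc⟩ := exists_positions hl h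
  set G := cycleGraph n ⊔ SimpleGraph.fromEdgeSet
    (shortcutEdges l i₁ (i₁ + (a : ZMod n)) (i₁ + (b : ZMod n)) (i₁ + (c : ZMod n)) :
      Set (Sym2 (ZMod n))) with hGdef
  have hG : cycleGraph n ≤ G := le_sup_left
  have hR : ∀ u v, posRel n l a b c u v →
      G.Adj (i₁ + (u : ZMod n)) (i₁ + (v : ZMod n)) := by
    intro u v huv
    have hb : 1 ≤ u ∧ u ≤ n ∧ 1 ≤ v ∧ v ≤ n ∧ u ≠ v := by
      unfold posRel at huv
      omega
    have hne : i₁ + (u : ZMod n) ≠ i₁ + (v : ZMod n) := fun e =>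
      hb.2.2.2.2 (add_cast_inj i₁ hb.1 hb.2.1 hb.2.2.1 hb.2.2.2.1 e)
    rw [hGdef, SimpleGraph.sup_adj, SimpleGraph.fromEdgeSet_adj, cycleGraph,
      SimpleGraph.fromEdgeSet_adj]
    simp only [shortcutEdges, Finset.coe_insert, Finset.coe_singleton, Set.mem_insert_iff,
      Set.mem_singleton_iff]
    rcases huv with ⟨rfl, rfl⟩ | ⟨rfl, rfl⟩ | ⟨rfl, rfl⟩ | ⟨rfl, rfl⟩ | ⟨rfl, rfl⟩
    · exact Or.inr ⟨Or.inl (by simp), hne⟩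
    · exact Or.inr ⟨Or.inr (Or.inl (by simp)), hne⟩
    · exact Or.inr ⟨Or.inr (Or.inr (Or.inl (by push_cast; simp only [add_assoc]))), hne⟩
    · exact Or.inr ⟨Or.inr (Or.inr (Or.inr (by push_cast; simp only [add_assoc]))), hne⟩
    · exact Or.inl ⟨⟨i₁, by simp⟩, hne⟩
  clear_value G
  constructor
  · exact hasCycleLength_of_pos (by omega) G hG i₁ _ hR _ (by omega) (shortSeq n l a b c)
      (shortSeq_mem ha habc) (shortSeq_inj ha habc) (shortSeq_adj ha)
      (shortSeq_close n l a b c)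
  · rcases habc with habc | habc
    · exact hasCycleLength_of_pos (by omega) G hG i₁ _ hR _ (by omega) (longSeq₁ n l a b c)
        (longSeq₁_mem ha habc) (longSeq₁_inj ha habc) (fun i _ => longSeq₁_adj ha habc i)
        (longSeq₁_close ha habc)
    · exact hasCycleLength_of_pos (by omega) G hG i₁ _ hR _ (by omega) (longSeq₂ n l a b c)
        (longSeq₂_mem ha habc) (longSeq₂_inj ha habc) (fun i _ => longSeq₂_adj ha habc i)
        (longSeq₂_close ha habc)
end

section
/- For every i ∈ ℤ_n and every integer l with 2 ≤ l ≤ n − 2, if e₁ ∈ E_i and e₂ ∈ E_{i+l} are crossing edges of K_n ∖ C_n, then the graph C_n ∪ {e₁, e₂} contains a cycle of length l + 2 and a cycle of length n − l + 2. -/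
/-!
Let `x₁, x₂, y₁, y₂` be the endpoints of the crossing chords `e₁ = {x₁, y₁}` and `e₂ = {x₂, y₂}` in
clockwise order, and let `a, b, c, d ≥ 1` be the consecutive arcs between them, `a + b + c + d = n`.
Subtracting directions gives `l ≡ (x₂ - x₁) + (y₂ - y₁) = a + c (mod n)`, and as both sides lie
strictly between `0` and `n`, `l = a + c`. Going clockwise from `x₁` to `x₂`, along `e₂` to `y₂`,
anticlockwise to `y₁` and along `e₁` back to `x₁` is a cycle of length `a + c + 2 = l + 2`
(`hasCycleLength_of_chords`). The same construction applied to the rotated quadruple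
`x₂, y₁, y₂, x₁`, which swaps the roles of the chords, gives length `b + d + 2 = n - l + 2`.
-/

open Filter Topology Classical

/-- `‖k‖`: the distance of `k` from `0` on the discrete circle `ZMod n`. -/
def circNorm {n : ℕ} (k : ZMod n) : ℕ := min k.val (-k).val

/-- `E_i`: the edges of `K_n` in direction `i`, i.e. pairs `{x,y}` with `x + y = i`. -/
def dirEdges (n : ℕ) (i : ZMod n) : Set (Sym2 (ZMod n)) :=
  {e | ∃ x y : ZMod n, e = s(x, y) ∧ x ≠ y ∧ x + y = i}

/-- Two edges are crossing if their four endpoints are all distinct and lie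
alternately on the cycle `C_n`. -/
def Crossing {n : ℕ} (e₁ e₂ : Sym2 (ZMod n)) : Prop :=
  ∃ x₁ y₁ x₂ y₂ : ZMod n, e₁ = s(x₁, y₁) ∧ e₂ = s(x₂, y₂) ∧
    InClockwiseOrder [x₁, x₂, y₁, y₂]

/-- A crossing is close if some pair of endpoints of the two edges is at circular
distance at most `βn`. -/
def CloseCrossing {n : ℕ} (β : ℝ) (e₁ e₂ : Sym2 (ZMod n)) : Prop :=
  Crossing e₁ e₂ ∧ ∃ a b : ZMod n, a ∈ e₁ ∧ b ∈ e₂ ∧ (circNorm (a - b) : ℝ) ≤ β * n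

/-- The centre point `i/2` (for odd `i.val` the floor `⌊i/2⌋`) of the direction `i`. -/
def dirCenter (n : ℕ) (i : ZMod n) : ZMod n := ((i.val / 2 : ℕ) : ZMod n)

/-- The distance of an edge from the centre point of its direction; within `E_i` this
realises the linear order `≤_i`. -/
def edgeRank (n : ℕ) (i : ZMod n) (e : Sym2 (ZMod n)) : ℕ :=
  Sym2.lift ⟨fun x y => min (circNorm (x - dirCenter n i)) (circNorm (y - dirCenter n i)),
    fun _ _ => min_comm _ _⟩ e

/-- The (1-indexed) position of an edge of `E_i` in the order `≤_i`. -/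
noncomputable def edgePos (n : ℕ) (i : ZMod n) (e : Sym2 (ZMod n)) : ℕ :=
  {e' ∈ dirEdges n i | edgeRank n i e' ≤ edgeRank n i e}.ncard

/-- `E_i^k`: the interval of `⌊βn⌋` consecutive edges of `(E_i, ≤_i)` starting from the
`k`-th smallest. -/
noncomputable def dirInterval (n : ℕ) (i : ZMod n) (β : ℝ) (k : ℕ) :
    Set (Sym2 (ZMod n)) :=
  {e ∈ dirEdges n i | k ≤ edgePos n i e ∧ edgePos n i e < k + ⌊β * n⌋₊}

/-- `M_i`: `E_i` without its leftmost and rightmost subintervals of length `⌊βn⌋`. -/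
noncomputable def dirMiddle (n : ℕ) (i : ZMod n) (β : ℝ) : Set (Sym2 (ZMod n)) :=
  {e ∈ dirEdges n i | ⌊β * n⌋₊ < edgePos n i e ∧
    edgePos n i e ≤ (dirEdges n i).ncard - ⌊β * n⌋₊}

/-- The direction `E_i` is `(β, ε', p)`-good in `G`. -/
def DirGood (n : ℕ) (β ε' p : ℝ) (G : SimpleGraph (ZMod n)) (i : ZMod n) : Prop :=
  (∀ k : ℕ, 1 ≤ k → (k : ℝ) ≤ (1/2 - β) * n →
    |((G.edgeSet ∩ dirInterval n i β k).ncard : ℝ) - β * n * p| ≤ ε' * (β * n * p)) ∧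
  |((G.edgeSet ∩ dirMiddle n i β).ncard : ℝ) - (1/2 - 2*β) * n * p| ≤
    ε' * ((1/2 - 2*β) * n * p)

/-- A list of distinct vertices `f 0, …, f m` with consecutive ones adjacent is a path. The last
conjunct records its edges, which is what rules out the closing edge `s(f m, f 0)`. -/
lemma exists_path_of_injOn {V : Type} {G : SimpleGraph V} (f : ℕ → V) (m : ℕ)
    (hinj : ∀ j ≤ m, ∀ k ≤ m, f j = f k → j = k)
    (hadj : ∀ k < m, G.Adj (f k) (f (k + 1))) :
    ∃ w : G.Walk (f 0) (f m), w.IsPath ∧ w.length = m ∧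
      (∀ v ∈ w.support, ∃ k ≤ m, v = f k) ∧
      (∀ e ∈ w.edges, ∃ k < m, e = s(f k, f (k + 1))) := by
  induction m with
  | zero => exact ⟨SimpleGraph.Walk.nil, by simp, by simp, by simp, by simp⟩
  | succ m ih =>
    obtain ⟨w, hp, hlen, hsup, hedge⟩ := ih
      (fun j hj k hk => hinj j (by omega) k (by omega)) (fun k hk => hadj k (by omega))
    refine ⟨w.concat (hadj m (by omega)), hp.concat ?_ _, by simp [hlen], ?_, ?_⟩
    · intro hmem
      obtain ⟨k, hk, h⟩ := hsup _ hmem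
      have := hinj _ le_rfl k (by omega) h
      omega
    · intro v hv
      rw [SimpleGraph.Walk.support_concat, List.mem_append, List.mem_singleton] at hv
      rcases hv with hv | rfl
      · obtain ⟨k, hk, h⟩ := hsup v hv
        exact ⟨k, by omega, h⟩
      · exact ⟨m + 1, le_rfl, rfl⟩
    · intro e he
      rw [SimpleGraph.Walk.edges_concat, List.concat_eq_append, List.mem_append,
        List.mem_singleton] at he
      rcases he with he | rfl
      · obtain ⟨k, hk, h⟩ := hedge e he
        exact ⟨k, by omega, h⟩
      · exact ⟨m, by omega, rfl⟩

lemma hasCycleLength_of_injOn {V : Type} {G : SimpleGraph V} (f : ℕ → V) (m : ℕ) (hm : 2 ≤ m)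
    (hinj : ∀ j ≤ m, ∀ k ≤ m, f j = f k → j = k)
    (hadj : ∀ k < m, G.Adj (f k) (f (k + 1))) (hclose : G.Adj (f m) (f 0)) :
    HasCycleLength G (m + 1) := by
  obtain ⟨w, hp, hlen, -, hedge⟩ := exists_path_of_injOn f m hinj hadj
  refine ⟨f m, SimpleGraph.Walk.cons hclose w, ?_, by simp [hlen]⟩
  rw [SimpleGraph.Walk.cons_isCycle_iff]
  refine ⟨hp, fun hmem => ?_⟩
  obtain ⟨k, hk, h⟩ := hedge _ hmem
  rcases Sym2.eq_iff.mp h with ⟨h1, -⟩ | ⟨h1, h2⟩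
  · have := hinj _ le_rfl k (by omega) h1
    omega
  · have := hinj _ le_rfl (k + 1) (by omega) h1
    have := hinj 0 (by omega) k (by omega) h2
    omega

/-- In a graph containing `C_n`, two crossing chords `{x₁, y₁}` and `{x₂, y₂}` close up with the
clockwise arcs from `x₁` to `x₂` and from `y₁` to `y₂`. -/
lemma hasCycleLength_of_chords {n : ℕ} {G : SimpleGraph (ZMod n)} (hn : 4 ≤ n)
    (hC : ∀ v : ZMod n, G.Adj v (v + 1)) {x₁ x₂ y₁ y₂ : ZMod n}
    (hord : InClockwiseOrder [x₁, x₂, y₁, y₂]) (h₁ : G.Adj x₁ y₁) (h₂ : G.Adj x₂ y₂) :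
    HasCycleLength G ((x₂ - x₁).val + (y₂ - y₁).val + 2) := by
  have : NeZero n := ⟨by omega⟩
  obtain ⟨hnd, hsum⟩ := hord
  have hpos : ∀ {u v : ZMod n}, u ≠ v → 0 < (v - u).val := fun h =>
    Nat.pos_of_ne_zero fun h0 => h (sub_eq_zero.mp ((ZMod.val_eq_zero _).mp h0)).symm
  simp only [List.nodup_cons, List.mem_cons, List.not_mem_nil, or_false, not_or] at hnd
  have ha := hpos hnd.1.1
  have hb := hpos hnd.2.1.1
  have hc := hpos hnd.2.2.1
  have hd := hpos (Ne.symm hnd.1.2.2)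
  simp [arcDist] at hsum
  obtain ⟨a, hadef⟩ : ∃ a, a = (x₂ - x₁).val := ⟨_, rfl⟩
  obtain ⟨b, hbdef⟩ : ∃ a, a = (y₁ - x₂).val := ⟨_, rfl⟩
  obtain ⟨c, hcdef⟩ : ∃ a, a = (y₂ - y₁).val := ⟨_, rfl⟩
  have hx₂ : x₂ = x₁ + (a : ℕ) := by rw [hadef, ZMod.natCast_zmod_val]; ring
  have hy₁ : y₁ = x₁ + ((a + b : ℕ) : ZMod n) := by
    rw [hadef, hbdef, Nat.cast_add, ZMod.natCast_zmod_val, ZMod.natCast_zmod_val]; ring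
  have hy₂ : y₂ = x₁ + ((a + b + c : ℕ) : ZMod n) := by
    rw [hadef, hbdef, hcdef, Nat.cast_add, Nat.cast_add, ZMod.natCast_zmod_val,
      ZMod.natCast_zmod_val, ZMod.natCast_zmod_val]; ring
  rw [← hadef, ← hcdef]
  rw [← hadef] at ha hsum
  rw [← hbdef] at hb hsum
  rw [← hcdef] at hc hsum
  -- Offsets from `x₁`: clockwise along `0, …, a`, then back along `a + b + c, …, a + b`.
  let g : ℕ → ℕ := fun k => if k ≤ a then k else 2 * a + b + c + 1 - k
  have hg1 : ∀ k ≤ a, g k = k := fun k hk => if_pos hk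
  have hg2 : ∀ k, a < k → g k = 2 * a + b + c + 1 - k := fun k hk => if_neg (by omega)
  have hglt : ∀ k ≤ a + c + 1, g k < n := by
    intro k hk
    rcases le_or_gt k a with h | h
    · rw [hg1 k h]; omega
    · rw [hg2 k h]; omega
  refine hasCycleLength_of_injOn (fun k => x₁ + (g k : ZMod n)) (a + c + 1) (by omega) ?_ ?_ ?_
  · intro j hj k hk h
    have h' := (ZMod.natCast_eq_natCast_iff' _ _ _).mp (add_left_cancel h)
    rw [Nat.mod_eq_of_lt (hglt j hj), Nat.mod_eq_of_lt (hglt k hk)] at h'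
    rcases le_or_gt j a with h1 | h1 <;> rcases le_or_gt k a with h2 | h2
    · rwa [hg1 j h1, hg1 k h2] at h'
    · rw [hg1 j h1, hg2 k h2] at h'; omega
    · rw [hg2 j h1, hg1 k h2] at h'; omega
    · rw [hg2 j h1, hg2 k h2] at h'; omega
  · intro k hk
    rcases lt_trichotomy k a with h | rfl | h
    · rw [hg1 k h.le, hg1 (k + 1) h, Nat.cast_succ, ← add_assoc]
      exact hC _
    · have e : 2 * k + b + c + 1 - (k + 1) = k + b + c := by omega
      rw [hg1 k le_rfl, hg2 (k + 1) (by omega), e, ← hx₂, ← hy₂]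
      exact h₂
    · have e : 2 * a + b + c + 1 - k = (2 * a + b + c + 1 - (k + 1)) + 1 := by omega
      rw [hg2 k h, hg2 (k + 1) (by omega), e, Nat.cast_succ, ← add_assoc]
      exact (hC _).symm
  · have e : 2 * a + b + c + 1 - (a + c + 1) = a + b := by omega
    rw [hg2 _ (by omega), hg1 0 (by omega), e, ← hy₁, Nat.cast_zero, add_zero]
    exact h₁.symm

lemma InClockwiseOrder.rotate_four {n : ℕ} {p q r s : ZMod n}
    (h : InClockwiseOrder [p, q, r, s]) : InClockwiseOrder [q, r, s, p] := by
  obtain ⟨hnd, hsum⟩ := h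
  refine ⟨?_, ?_⟩
  · simpa using (List.nodup_rotate (n := 1)).mpr hnd
  · simp at hsum ⊢
    omega

lemma add_eq_of_mem_dirEdges {n : ℕ} {i x y : ZMod n} (h : s(x, y) ∈ dirEdges n i) :
    x + y = i := by
  obtain ⟨u, v, he, -, hs⟩ := h
  rcases Sym2.eq_iff.mp he with ⟨rfl, rfl⟩ | ⟨rfl, rfl⟩
  · exact hs
  · rwa [add_comm]

/-- If `e₁ ∈ E_i` and `e₂ ∈ E_{i+l}` (with `2 ≤ l ≤ n−2`) are crossing edges of
`K_n ∖ C_n`, then `C_n ∪ {e₁, e₂}` contains cycles of lengths `l + 2` and `n − l + 2`. -/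
theorem crossing_gives_cycles (n : ℕ) (i : ZMod n) (l : ℕ) (hl2 : 2 ≤ l) (hln : l ≤ n - 2)
    (e₁ e₂ : Sym2 (ZMod n))
    (he₁ : e₁ ∈ dirEdges n i) (he₂ : e₂ ∈ dirEdges n (i + (l : ZMod n)))
    (hc₁ : e₁ ∉ (cycleGraph n).edgeSet) (hc₂ : e₂ ∉ (cycleGraph n).edgeSet)
    (hcross : Crossing e₁ e₂) :
    HasCycleLength (cycleGraph n ⊔ SimpleGraph.fromEdgeSet {e₁, e₂}) (l + 2) ∧
    HasCycleLength (cycleGraph n ⊔ SimpleGraph.fromEdgeSet {e₁, e₂}) (n - l + 2) := by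
  have hn : 4 ≤ n := by omega
  have : NeZero n := ⟨by omega⟩
  have : Fact (1 < n) := ⟨by omega⟩
  obtain ⟨x₁, y₁, x₂, y₂, rfl, rfl, hord⟩ := hcross
  have hs₁ := add_eq_of_mem_dirEdges he₁
  have hs₂ := add_eq_of_mem_dirEdges he₂
  have hord' := hord.rotate_four
  have hC : ∀ v : ZMod n, (cycleGraph n ⊔ SimpleGraph.fromEdgeSet {s(x₁, y₁), s(x₂, y₂)}).Adj
      v (v + 1) := by
    intro v
    left
    exact (SimpleGraph.fromEdgeSet_adj _).mpr ⟨⟨v, rfl⟩, by simp⟩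
  obtain ⟨hnd, hsum⟩ := id hord
  simp only [List.nodup_cons, List.mem_cons, List.not_mem_nil, or_false, not_or] at hnd
  have h₁ : (cycleGraph n ⊔ SimpleGraph.fromEdgeSet {s(x₁, y₁), s(x₂, y₂)}).Adj x₁ y₁ :=
    Or.inr ((SimpleGraph.fromEdgeSet_adj _).mpr ⟨by simp, hnd.1.2.1⟩)
  have h₂ : (cycleGraph n ⊔ SimpleGraph.fromEdgeSet {s(x₁, y₁), s(x₂, y₂)}).Adj x₂ y₂ :=
    Or.inr ((SimpleGraph.fromEdgeSet_adj _).mpr ⟨by simp, hnd.2.1.2⟩)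
  have hpos : ∀ {u v : ZMod n}, u ≠ v → 0 < (v - u).val := fun h =>
    Nat.pos_of_ne_zero fun h0 => h (sub_eq_zero.mp ((ZMod.val_eq_zero _).mp h0)).symm
  have hb := hpos hnd.2.1.1
  have hd := hpos (Ne.symm hnd.1.2.2)
  simp [arcDist] at hsum
  -- Both sides are below `n` and congruent to `(x₂ + y₂) - (x₁ + y₁)`.
  have hl : (x₂ - x₁).val + (y₂ - y₁).val = l := by
    have hmod : (((x₂ - x₁).val + (y₂ - y₁).val : ℕ) : ZMod n) = (l : ℕ) := by
      rw [Nat.cast_add, ZMod.natCast_zmod_val, ZMod.natCast_zmod_val]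
      linear_combination hs₂ - hs₁
    have h := (ZMod.natCast_eq_natCast_iff' _ _ _).mp hmod
    rwa [Nat.mod_eq_of_lt (by omega), Nat.mod_eq_of_lt (by omega)] at h
  constructor
  · rw [← hl]
    exact hasCycleLength_of_chords hn hC hord h₁ h₂
  · have hnl : n - l = (y₁ - x₂).val + (x₁ - y₂).val := by omega
    rw [hnl]
    exact hasCycleLength_of_chords hn hC hord' h₂ h₁.symm
end

section
/- Let k be a positive integer and let G be a graph on n vertices with more than 90k·n^{1 + 1/k} edges. Then G contains a cycle of length 2k. -/
/-!
Suppose `G` has no cycle of length `2k`. Some bipartite subgraph of `G` keeps half of the edges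
(`exists_bipartite_subgraph`), and inside it some vertex set `W` induces minimum degree at least
`d = ⌊45 k n^(1/k)⌋` (`exists_min_degree`). Let `L 0, L 1, …` be the distance layers from a vertex
of `W`. Bipartiteness forbids edges inside a layer.

For `i < k` there are at most `3k (|L i| + |L (i+1)|)` edges between `L i` and `L (i+1)`
(`layer_edges_le`). Otherwise these edges contain a subgraph of minimum degree at least `3k`, and the
end of a longest path in it yields a cycle with a chord on more than `3k` vertices
(`exists_cycle_chord`). Let `m` be the least number such that all vertices of this cycle in `L i`
have the same `m`-th ancestor in the breadth-first tree, and colour such a vertex according to whether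
its `(m-1)`-st ancestor is a fixed one; both outcomes occur. By `two_periodic`, if no path of
length `2k - 2m` in the chorded cycle joins the two colours, then the colouring is invariant
under moving two steps along the cycle, hence constant on `L i`, a contradiction. Such a path has
both ends in `L i`, and together with the tree paths from its ends to their common ancestor it is
a cycle of length `2k` (`cycle_of_theta`).

Counting the edges at each layer then gives `|L (i+1)| ≥ 11 n^(1/k) |L i|` for `i < k`
(`growth`), so `|L k| ≥ 11^k n > n`, which is absurd.
-/

open Filter Topology Classical

section

variable {V : Type}

/-! ### Cycles from vertex sequences -/

theorem exists_walk_of_seq {V : Type} (G : SimpleGraph V) (g : ℕ → V) (j : ℕ)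
    (h : ∀ i, i < j → G.Adj (g i) (g (i + 1))) :
    ∃ w : G.Walk (g 0) (g j), w.length = j ∧ w.support = (List.range (j + 1)).map g ∧
      w.edges = (List.range j).map (fun i => s(g i, g (i + 1))) := by
  induction j with
  | zero => exact ⟨.nil, by simp⟩
  | succ j ih =>
    obtain ⟨w, h1, h2, h3⟩ := ih (fun i hi => h i (by omega))
    refine ⟨w.concat (h j (by omega)), by simp [h1], ?_, ?_⟩
    · rw [SimpleGraph.Walk.support_concat, h2, List.range_succ (n := j + 1)]; simp
    · rw [SimpleGraph.Walk.edges_concat, h3, List.range_succ (n := j)]; simp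

/-- A cyclic sequence of `N ≥ 3` distinct vertices, consecutive ones adjacent, is a cycle. -/
theorem hasCycleLength_of_seq_s19 {V : Type} (G : SimpleGraph V) (g : ℕ → V) (N : ℕ) (hN : 3 ≤ N)
    (hinj : ∀ i j, i < N → j < N → g i = g j → i = j)
    (hadj : ∀ i, i + 1 < N → G.Adj (g i) (g (i + 1))) (hcl : G.Adj (g (N - 1)) (g 0)) :
    HasCycleLength G N := by
  obtain ⟨w, h1, h2, h3⟩ := exists_walk_of_seq G g (N - 1) (fun i hi => hadj i (by omega))
  refine ⟨_, SimpleGraph.Walk.cons hcl w, ?_, by simp [h1]; omega⟩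
  rw [SimpleGraph.Walk.cons_isCycle_iff, SimpleGraph.Walk.isPath_def, h2, h3]
  constructor
  · refine List.Nodup.map_on ?_ List.nodup_range
    intro i hi j hj h
    simp only [List.mem_range] at hi hj
    exact hinj i j (by omega) (by omega) h
  · simp only [List.mem_map, List.mem_range, not_exists, not_and]
    intro i hi h
    rw [Sym2.eq_iff] at h
    rcases h with ⟨h, h'⟩ | ⟨h, h'⟩
    · have := hinj _ _ (by omega) (by omega) h
      have := hinj _ _ (by omega) (by omega) h'
      omega
    · have := hinj _ _ (by omega) (by omega) h
      have := hinj _ _ (by omega) (by omega) h'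
      omega

/-! ### Paths in a cycle with a chord -/

/-- Two functions with a common period agree once they agree on one full period. -/
theorem extend_periodic {f g : ℤ → Prop} {P s : ℤ} (hP : 0 < P) (hf : Function.Periodic f P)
    (hg : Function.Periodic g P) (h : ∀ j, s ≤ j → j < s + P → f j = g j) (j : ℤ) : f j = g j := by
  have h1 := hf.sub_zsmul_eq (x := j) ((j - s) / P)
  have h2 := hg.sub_zsmul_eq (x := j) ((j - s) / P)
  have h3 := Int.emod_add_mul_ediv (j - s) P
  have h4 := Int.emod_nonneg (j - s) hP.ne'
  have h5 := Int.emod_lt_of_pos (j - s) hP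
  rw [smul_eq_mul, mul_comm] at h1 h2
  rw [← h1, ← h2]
  exact h _ (by linarith) (by linarith)

theorem periodic_reflect {f : ℤ → Prop} {P : ℤ} (hf : Function.Periodic f P) (C : ℤ) :
    Function.Periodic (fun j => f (C - j)) P := by
  intro j
  have := hf (C - (j + P))
  simp only
  rw [← this]; congr 1; ring

theorem periodic_shift {f : ℤ → Prop} {P : ℤ} (hf : Function.Periodic f P) (C : ℤ) :
    Function.Periodic (fun j => f (C + j)) P := by
  intro j
  have := hf (C + j)
  simp only
  rw [← this]; congr 1; ring

/-- Let `c` run around a cycle with `N` vertices and chord joining `c 0` to `c r`, and let `P` be a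
2-colouring of the vertices. If no path of length `l < N` in the chorded cycle has ends of different
colours, then `P ∘ c` has period `2`. The cycle is parametrized by `ℤ`, periodically mod `N`.

Paths along the cycle give the period `l`. Paths through the chord that leave it on opposite sides of
the chord give two reflection symmetries, `j ↦ r - 1 - j` and `j ↦ r + 1 - j`, whose composition is
translation by `2`. Each reflection is first obtained on an interval only, which has to contain
a full period: one of `l`, `N - l`, `N - r - 1`, `r - 1` is a short enough period. -/
theorem two_periodic {V : Type} (H : SimpleGraph V) (N r : ℤ) (l : ℕ) (c : ℤ → V)
    (hper : ∀ z, c (z + N) = c z)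
    (hinj : ∀ z w, c z = c w → N ∣ z - w) (hadj : ∀ z, H.Adj (c z) (c (z + 1)))
    (hch : H.Adj (c 0) (c r)) (hr2 : 2 ≤ r) (hrN : r + 2 ≤ N) (hl : 1 ≤ l) (hlN : (l : ℤ) < N)
    (P : V → Prop)
    (hno : ∀ q : ℕ → V, (∀ i j, i ≤ l → j ≤ l → q i = q j → i = j) →
      (∀ i, i < l → H.Adj (q i) (q (i + 1))) → (∀ i, ∃ z, q i = c z) → P (q 0) = P (q l)) (z : ℤ) :
    P (c z) = P (c (z + 2)) := by
  have hN : 0 < N := by omega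
  -- A path is described by integers in a window of length `N`, stepping by `±1` or along the chord.
  have key : ∀ (y : ℕ → ℤ) (w : ℤ), (∀ t, t ≤ l → w ≤ y t ∧ y t < w + N) →
      (∀ i j, i ≤ l → j ≤ l → y i = y j → i = j) →
      (∀ t, t < l → y (t + 1) = y t + 1 ∨ y t = y (t + 1) + 1 ∨ (y t = 0 ∧ y (t + 1) = r)) →
      P (c (y 0)) = P (c (y l)) := by
    intro y w hw hy hs
    refine hno (fun t => c (y t)) ?_ ?_ (fun t => ⟨_, rfl⟩)
    · intro i j hi hj hij
      apply hy i j hi hj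
      obtain ⟨e, he⟩ := hinj _ _ hij
      have := hw i hi
      have := hw j hj
      have : e = 0 := by
        have h1 : e < 1 := by
          by_contra h; nlinarith
        have h2 : -1 < e := by
          by_contra h; nlinarith
        omega
      subst this
      omega
    · intro i hi
      rcases hs i hi with h | h | ⟨h, h'⟩
      · simp only [h]; exact hadj _
      · simp only [h]; exact (hadj _).symm
      · simp only [h, h']; exact hch
  set f : ℤ → Prop := fun z => P (c z) with hf
  have fN : Function.Periodic f N := fun z => by simp only [hf, hper]
  have fl : Function.Periodic f l := by
    intro z
    have := key (fun t => z + t) z (fun t ht => by omega) (fun i j _ _ h => by omega)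
      (fun t _ => by left; push_cast; ring)
    simp only [hf]
    simpa using this.symm
  -- From `c j` back to `c 0`, across the chord, and forward from `c r`.
  have R1 : ∀ j : ℤ, 0 ≤ j → r + l - N ≤ j → j ≤ l - 1 → j ≤ r - 1 → f j = f (r - 1 - j) := by
    intro j h0 h1 h2 h3
    have := key (fun t => if (t : ℤ) ≤ j then j - t else r + (t - j - 1)) 0
      (fun t ht => by split_ifs <;> omega) (fun i k _ _ h => by split_ifs at h <;> omega)
      (fun t ht => by push_cast; split_ifs <;> omega)
    rw [if_pos (by simpa using h0), if_neg (by omega)] at this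
    rw [← fl (r - 1 - j)]
    simp only [hf]
    convert this using 3
    · simp
    · ring
  -- From `c (-j)` forward to `c 0`, across the chord, and back from `c r`.
  have R2 : ∀ j : ℤ, 0 ≤ j → l - r ≤ j → j ≤ l - 1 → j ≤ N - r - 1 → f (-j) = f (r + 1 + j) := by
    intro j h0 h1 h2 h3
    have := key (fun t => if (t : ℤ) ≤ j then -j + t else r - (t - j - 1)) (r - N + 1)
      (fun t ht => by split_ifs <;> omega) (fun i k _ _ h => by split_ifs at h <;> omega)
      (fun t ht => by push_cast; split_ifs <;> omega)
    rw [if_pos (by simpa using h0), if_neg (by omega)] at this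
    rw [← fl.sub_eq (r + 1 + j)]
    simp only [hf]
    convert this using 3
    · simp
    · ring
  -- Short paths whose two arcs both lie between `c 0` and `c r`.
  have N1 : (l : ℤ) ≤ r → Function.Periodic f (r + 1) := by
    intro hlr j
    have := extend_periodic (s := 0) (by omega) fl (periodic_shift fl (r + 1)) (by
      intro j h0 h1
      have := key (fun t => if (t : ℤ) ≤ j then j - t else r - (t - j - 1)) 0
        (fun t ht => by split_ifs <;> omega) (fun i k _ _ h => by split_ifs at h <;> omega)
        (fun t ht => by push_cast; split_ifs <;> omega)
      rw [if_pos (by simpa using h0), if_neg (by omega)] at this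
      rw [← fl.sub_eq (r + 1 + j)]
      simp only [hf]
      convert this using 3
      · simp
      · ring) j
    rw [this, add_comm]
  -- Short paths whose two arcs both lie outside the stretch between `c 0` and `c r`.
  have N2 : (l : ℤ) ≤ N - r → Function.Periodic f (r - 1) := by
    intro hlr j
    have := extend_periodic (s := 1 - l) (by omega) fl (periodic_shift fl (r - 1)) (by
      intro j h0 h1
      have := key (fun t => if (t : ℤ) ≤ -j then j + t else r + (t + j - 1)) j
        (fun t ht => by split_ifs <;> omega) (fun i k _ _ h => by split_ifs at h <;> omega)
        (fun t ht => by push_cast; split_ifs <;> omega)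
      rw [if_pos (by simp; omega), if_neg (by omega)] at this
      rw [← fl (r - 1 + j)]
      simp only [hf]
      convert this using 3
      · simp
      · ring) j
    rw [this, add_comm]
  -- The two upper bounds on `p` are the lengths of the intervals of validity of `R1` and `R2`.
  have fin : ∀ p : ℤ, 0 < p → Function.Periodic f p →
      p ≤ min ((l : ℤ) - 1) (r - 1) - max 0 (r + l - N) + 1 →
      p ≤ min ((l : ℤ) - 1) (N - r - 1) - max 0 (l - r) + 1 → f z = f (z + 2) := by
    intro p hp fp h1 h2
    have A := extend_periodic (s := max 0 (r + l - N)) hp fp (periodic_reflect fp (r - 1))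
      (fun j _ _ => R1 j (by omega) (by omega) (by omega) (by omega))
    have B := extend_periodic (s := max 0 (l - r)) hp (periodic_reflect fp 0)
      (periodic_shift fp (r + 1))
      (fun j _ _ => by
        simpa using R2 j (by omega) (by omega) (by omega) (by omega))
    have := B (-(r - 1 - z))
    simp only [zero_sub, neg_neg] at this
    rw [A z, this]
    exact congrArg f (by ring)
  rcases le_or_gt (l : ℤ) r with h | h <;> rcases le_or_gt (l : ℤ) (N - r) with h' | h'
  · exact fin l (by omega) fl (by omega) (by omega)
  · refine fin (N - r - 1) (by omega) ?_ (by omega) (by omega)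
    have := fN.sub_period (N1 h)
    rwa [← sub_sub] at this
  · exact fin (r - 1) (by omega) (N2 h') (by omega) (by omega)
  · exact fin (N - l) (by omega) (fN.sub_period fl) (by omega) (by omega)

/-! ### Finding cycles with a chord -/

/-- In a graph of minimum degree at least `D ≥ 3` on `W`, all neighbours of the first vertex of
a longest path lie on that path. The farthest one closes a cycle with at least `D + 1` vertices, and
another one that is not the second vertex gives a chord. -/
theorem exists_cycle_chord [Fintype V] (H : SimpleGraph V) (W : Finset V) (hW : W.Nonempty) (D : ℕ)
    (hD : 3 ≤ D) (hdeg : ∀ v ∈ W, D ≤ (W.filter (H.Adj v)).card) :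
    ∃ (N r : ℤ) (c : ℤ → V), D + 1 ≤ N ∧ 2 ≤ r ∧ r + 2 ≤ N ∧ (∀ z, c (z + N) = c z) ∧
      (∀ z w, c z = c w → N ∣ z - w) ∧ (∀ z, H.Adj (c z) (c (z + 1))) ∧ H.Adj (c 0) (c r) := by
  let Q : ℕ → Prop := fun m => ∃ p : ℕ → V, (∀ i, i ≤ m → p i ∈ W) ∧
    (∀ i j, i ≤ m → j ≤ m → p i = p j → i = j) ∧ ∀ i, i < m → H.Adj (p i) (p (i + 1))
  have Q0 : Q 0 := by
    obtain ⟨x, hx⟩ := hW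
    exact ⟨fun _ => x, fun _ _ => hx, fun i j hi hj _ => by omega, fun i hi => by omega⟩
  -- `Q m`: there is a path of length `m` inside `W`.
  have Qb : ∀ m, Q m → m ≤ Fintype.card V := by
    rintro m ⟨p, -, hp, -⟩
    have := Finset.card_le_card_of_injOn (s := Finset.range (m + 1)) (t := Finset.univ) p
      (fun _ _ => Finset.mem_coe.2 (Finset.mem_univ _)) (fun i hi j hj h => by
        simp at hi hj; exact hp i j (by omega) (by omega) h)
    rw [Finset.card_range, Finset.card_univ] at this
    omega
  obtain ⟨p, hpW, hpi, hpa⟩ : Q (Nat.findGreatest Q (Fintype.card V)) :=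
    Nat.findGreatest_spec (Nat.zero_le _) Q0
  set m := Nat.findGreatest Q (Fintype.card V) with hm
  have hmax : ¬ Q (m + 1) := fun h => by
    have := Nat.le_findGreatest (Qb _ h) h
    omega
  -- Otherwise `u` could be prepended to the longest path.
  have hnb : ∀ u ∈ W, H.Adj (p 0) u → ∃ j, 1 ≤ j ∧ j ≤ m ∧ p j = u := by
    intro u hu hau
    by_contra hcon
    push Not at hcon
    have hne : ∀ j, j ≤ m → p j ≠ u := by
      intro j hj h
      rcases Nat.eq_zero_or_pos j with rfl | h0
      · subst h; exact H.loopless.irrefl _ hau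
      · exact hcon j h0 hj h
    apply hmax
    refine ⟨fun j => if j = 0 then u else p (j - 1), ?_, ?_, ?_⟩
    · intro i hi
      dsimp only
      split_ifs
      · exact hu
      · exact hpW _ (by omega)
    · intro i j hi hj h
      dsimp only at h
      split_ifs at h
      · omega
      · exact absurd h.symm (hne _ (by omega))
      · exact absurd h (hne _ (by omega))
      · have := hpi _ _ (by omega) (by omega) h
        omega
    · intro i hi
      dsimp only
      rcases Nat.eq_zero_or_pos i with rfl | h0
      · simpa using hau.symm
      · rw [if_neg (by omega), if_neg (by omega)]
        have := hpa (i - 1) (by omega)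
        rwa [show i - 1 + 1 = i + 1 - 1 by omega] at this
  set J := (Finset.Icc 1 m).filter (fun j => H.Adj (p 0) (p j)) with hJ
  have hJc : D ≤ J.card := by
    refine (hdeg (p 0) (hpW 0 (by omega))).trans ?_
    refine (Finset.card_le_card ?_).trans (Finset.card_image_le (f := p))
    intro u hu
    rw [Finset.mem_filter] at hu
    obtain ⟨j, h1, h2, rfl⟩ := hnb u hu.1 hu.2
    exact Finset.mem_image_of_mem _ (by simp [hJ, h1, h2, hu.2])
  have hJn : J.Nonempty := Finset.card_pos.1 (by omega)
  set t := J.max' hJn with ht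
  have htJ : t ∈ J := J.max'_mem hJn
  have htm : t ≤ m := by simp [hJ] at htJ; omega
  have hta : H.Adj (p 0) (p t) := by simp [hJ] at htJ; exact htJ.2
  have hDt : D ≤ t := by
    have : J ⊆ Finset.Icc 1 t := by
      intro j hj
      have := J.le_max' j hj
      simp [hJ] at hj
      simp; omega
    have := Finset.card_le_card this
    simp at this; omega
  obtain ⟨s, hs⟩ : ((J.erase t).erase 1).Nonempty := by
    apply Finset.card_pos.1
    have := Finset.pred_card_le_card_erase (s := J.erase t) (a := 1)
    have := Finset.pred_card_le_card_erase (s := J) (a := t)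
    omega
  rw [Finset.mem_erase, Finset.mem_erase] at hs
  obtain ⟨hs1, hst, hsJ⟩ := hs
  have hst' : s ≤ t := J.le_max' s hsJ
  have hsa : H.Adj (p 0) (p s) := by simp [hJ] at hsJ; exact hsJ.2
  have hs0 : 1 ≤ s := by simp [hJ] at hsJ; omega
  have hNpos : (0 : ℤ) < (t : ℤ) + 1 := by omega
  have hb : ∀ z : ℤ, 0 ≤ z % ((t : ℤ) + 1) ∧ z % ((t : ℤ) + 1) < t + 1 := fun z =>
    ⟨Int.emod_nonneg _ hNpos.ne', Int.emod_lt_of_pos _ hNpos⟩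
  refine ⟨t + 1, s, fun z => p (z % ((t : ℤ) + 1)).toNat, by omega, by omega, by omega, ?_, ?_, ?_, ?_⟩
  · intro z; simp
  · intro z w h
    have h1 := hb z
    have h2 := hb w
    have := hpi _ _ (by omega) (by omega) h
    exact (Int.emod_eq_emod_iff_emod_sub_eq_zero.1 (by omega) |> Int.dvd_of_emod_eq_zero)
  · intro z
    have h1 := hb z
    dsimp only
    by_cases hz : z % ((t : ℤ) + 1) = t
    · have : (z + 1) % ((t : ℤ) + 1) = 0 := by
        rw [Int.add_emod, hz]; simp
      rw [this, hz]
      simpa using hta.symm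
    · have : (z + 1) % ((t : ℤ) + 1) = z % ((t : ℤ) + 1) + 1 := by
        rw [← Int.emod_add_emod]
        exact Int.emod_eq_of_lt (by omega) (by omega)
      rw [this, show (z % ((t : ℤ) + 1) + 1).toNat = (z % ((t : ℤ) + 1)).toNat + 1 by omega]
      exact hpa _ (by omega)
  · have : (s : ℤ) % ((t : ℤ) + 1) = s := Int.emod_eq_of_lt (by omega) (by omega)
    simp only [this]
    simpa using hsa

/-- A graph with average degree at least `2d` on `W` induces minimum degree at least `d` on some
nonempty subset: deleting a vertex of degree less than `d` does not decrease the average below `2d`. -/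
theorem exists_min_degree (H : SimpleGraph V) (d : ℕ) (W : Finset V) :
    W.Nonempty → 2 * d * W.card ≤ ∑ v ∈ W, (W.filter (H.Adj v)).card →
    ∃ W' ⊆ W, W'.Nonempty ∧ ∀ v ∈ W', d ≤ (W'.filter (H.Adj v)).card := by
  induction W using Finset.strongInduction with
  | H W ih =>
  intro hW hc
  by_cases hall : ∀ v ∈ W, d ≤ (W.filter (H.Adj v)).card
  · exact ⟨W, subset_rfl, hW, hall⟩
  push Not at hall
  obtain ⟨v, hv, hvd⟩ := hall
  have hcard := Finset.card_erase_add_one hv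
  have hdeg : ∀ u ∈ W, (W.filter (H.Adj u)).card =
      ((W.erase v).filter (H.Adj u)).card + if H.Adj v u then 1 else 0 := by
    intro u hu
    conv_lhs => rw [← Finset.insert_erase hv]
    rw [Finset.filter_insert, H.adj_comm u v]
    split_ifs
    · rw [Finset.card_insert_of_notMem (by simp)]
    · rfl
  have hsum : ∑ u ∈ W, (W.filter (H.Adj u)).card =
      ∑ u ∈ W.erase v, ((W.erase v).filter (H.Adj u)).card + 2 * (W.filter (H.Adj v)).card := by
    have hite : ∑ u ∈ W, (if H.Adj v u then 1 else 0) = (W.filter (H.Adj v)).card := by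
      rw [Finset.card_filter]
    rw [Finset.sum_congr rfl hdeg, Finset.sum_add_distrib, hite, ← Finset.add_sum_erase _ _ hv]
    have := hdeg v hv
    simp only [SimpleGraph.irrefl, if_false] at this
    omega
  have hne : (W.erase v).Nonempty := by
    rw [Finset.nonempty_iff_ne_empty]
    intro h0
    rw [h0] at hsum hcard
    simp at hsum hcard
    rw [← hcard] at hc
    omega
  obtain ⟨W', h1, h2, h3⟩ := ih _ (Finset.erase_ssubset hv) hne (by
    rw [hsum] at hc
    rw [← hcard] at hc
    nlinarith)
  exact ⟨W', h1.trans (Finset.erase_subset _ _), h2, h3⟩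

/-- The tree is given by levels `lev`, parents `par`, the root `x` and the set `R` of its vertices.
If the edges of `G` between levels `i` and `i + 1`, `i < k`, contain a cycle with a chord on at least
`2k` vertices, then `G` has a cycle of length `2k`. -/
theorem cycle_of_theta (G H : SimpleGraph V) (lev : V → ℕ) (par : V → V) (x : V) (R : V → Prop)
    (hpar : ∀ v, R v → lev v ≠ 0 → G.Adj v (par v) ∧ R (par v) ∧ lev (par v) + 1 = lev v)
    (hroot : ∀ v, R v → lev v = 0 → v = x) (k i : ℕ) (hik : i < k) (hHG : H ≤ G)
    (hH : ∀ u v, H.Adj u v →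
      R u ∧ (lev u = i ∧ lev v = i + 1 ∨ lev u = i + 1 ∧ lev v = i))
    (N r : ℤ) (c : ℤ → V) (hN : 2 * k ≤ N) (hr2 : 2 ≤ r) (hrN : r + 2 ≤ N)
    (hper : ∀ z, c (z + N) = c z)
    (hinj : ∀ z w, c z = c w → N ∣ z - w) (hadj : ∀ z, H.Adj (c z) (c (z + 1)))
    (hch : H.Adj (c 0) (c r)) : HasCycleLength G (2 * k) := by
  have hanc : ∀ s v, R v → s ≤ lev v → R (par^[s] v) ∧ lev (par^[s] v) + s = lev v := by
    intro s
    induction s with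
    | zero => intro v hv _; exact ⟨hv, rfl⟩
    | succ s ih =>
      intro v hv hs
      obtain ⟨h1, h2⟩ := ih v hv (by omega)
      rw [Function.iterate_succ_apply']
      obtain ⟨-, h3, h4⟩ := hpar _ h1 (by omega)
      exact ⟨h3, by omega⟩
  have hancadj : ∀ s v, R v → s + 1 ≤ lev v → G.Adj (par^[s] v) (par^[s + 1] v) := by
    intro s v hv hs
    obtain ⟨h1, h2⟩ := hanc s v hv (by omega)
    rw [Function.iterate_succ_apply']
    exact (hpar _ h1 (by omega)).1
  have hRc : ∀ z, R (c z) := fun z => (hH _ _ (hadj z)).1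
  have hlc : ∀ z, lev (c z) = i ∧ lev (c (z + 1)) = i + 1 ∨ lev (c z) = i + 1 ∧ lev (c (z + 1)) = i :=
    fun z => (hH _ _ (hadj z)).2
  have hl2 : ∀ (z : ℤ), lev (c (z + 2)) = lev (c z) := by
    intro z
    have h1 := hlc z
    have h2 := hlc (z + 1)
    rw [show z + 1 + 1 = z + 2 by ring] at h2
    omega
  have hex : ∃ m, ∀ z w, lev (c z) = i → lev (c w) = i → par^[m] (c z) = par^[m] (c w) := by
    refine ⟨i, fun z w hz hw => ?_⟩
    have h1 := hanc i _ (hRc z) hz.ge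
    have h2 := hanc i _ (hRc w) hw.ge
    rw [hroot _ h1.1 (by omega), hroot _ h2.1 (by omega)]
  set m := Nat.find hex with hm
  have hmi : m ≤ i := by
    refine Nat.find_min' hex (fun z w hz hw => ?_)
    have h1 := hanc i _ (hRc z) hz.ge
    have h2 := hanc i _ (hRc w) hw.ge
    rw [hroot _ h1.1 (by omega), hroot _ h2.1 (by omega)]
  have hmeq := Nat.find_spec hex
  rw [← hm] at hmeq
  -- `c z` and `c (z + 2)` are distinct vertices of level `i` for a suitable `z`.
  have hm0 : m ≠ 0 := by
    intro h0
    rw [h0] at hmeq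
    obtain ⟨z, hz⟩ : ∃ z, lev (c z) = i := by
      rcases hlc 0 with h | h
      exacts [⟨_, h.1⟩, ⟨_, h.2⟩]
    have := hinj _ _ (hmeq (z + 2) z (by rw [hl2, hz]) hz)
    have := Int.le_of_dvd (by norm_num) this
    omega
  have hmin := Nat.find_min hex (m := m - 1) (by omega)
  push Not at hmin
  obtain ⟨z0, z1, hz0, hz1, hz01⟩ := hmin
  -- The colouring: vertices of level `i` with the same `(m-1)`-st ancestor as `c z0`.
  set P : V → Prop := fun v => lev v = i ∧ par^[m - 1] v = par^[m - 1] (c z0) with hP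
  by_contra hcyc
  have h2per := two_periodic H N r (2 * k - 2 * m) c hper hinj hadj hch hr2 hrN (by omega)
    (by omega) P (by
      intro q hqi hqa hqc
      by_contra hne
      obtain ⟨l, hl⟩ : ∃ l, l = 2 * k - 2 * m := ⟨_, rfl⟩
      rw [← hl] at hqi hqa hne
      have hRq : ∀ t, R (q t) := fun t => by
        obtain ⟨z, hz⟩ := hqc t
        rw [hz]; exact hRc z
      have hlq : ∀ t, i ≤ lev (q t) := fun t => by
        obtain ⟨z, hz⟩ := hqc t
        have := hlc z
        rw [hz]; omega
      have hpq : ∀ t, 2 * t ≤ l → lev (q (2 * t)) = lev (q 0) := by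
        intro t
        induction t with
        | zero => intro _; rfl
        | succ t ih =>
          intro ht
          have h0 := ih (by omega)
          have h1 := (hH _ _ (hqa (2 * t) (by omega))).2
          have h2 := (hH _ _ (hqa (2 * t + 1) (by omega))).2
          rw [show 2 * (t + 1) = 2 * t + 1 + 1 by ring]
          omega
      have hl0 : lev (q l) = lev (q 0) := by
        have := hpq (k - m) (by omega)
        rwa [show 2 * (k - m) = l by omega] at this
      have hq0 : lev (q 0) = i := by
        by_contra h
        exact hne (by simp only [hP, hl0, h, false_and])
      have hql : lev (q l) = i := by rw [hl0, hq0]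
      have hdiff : par^[m - 1] (q l) ≠ par^[m - 1] (q 0) := by
        intro h
        exact hne (by simp only [hP, hq0, hql, h])
      have hdiff' : ∀ s, s < m → par^[s] (q l) ≠ par^[s] (q 0) := by
        intro s hs h
        apply hdiff
        rw [show m - 1 = (m - 1 - s) + s by omega, Function.iterate_add_apply,
          Function.iterate_add_apply, h]
      have hsame : par^[m] (q l) = par^[m] (q 0) := by
        obtain ⟨z, hz⟩ := hqc 0
        obtain ⟨w, hw⟩ := hqc l
        rw [hz] at hq0 ⊢
        rw [hw] at hql ⊢
        exact hmeq _ _ hql hq0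
      have hla : ∀ s, s ≤ m → lev (par^[s] (q 0)) + s = i := fun s hs => by
        have := (hanc s _ (hRq 0) (by omega)).2
        omega
      have hlb : ∀ s, s ≤ m → lev (par^[s] (q l)) + s = i := fun s hs => by
        have := (hanc s _ (hRq l) (by omega)).2
        omega
      -- The cycle of length `l + 2m = 2k`: along `q`, then down the tree from `q l` to the common
      -- `m`-th ancestor, and back up to `q 0`.
      apply hcyc
      have hlt : ∀ a b, a < b → b < 2 * k →
          (if a ≤ l then q a else if a ≤ l + m then par^[a - l] (q l)
            else par^[l + 2 * m - a] (q 0)) ≠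
          (if b ≤ l then q b else if b ≤ l + m then par^[b - l] (q l)
            else par^[l + 2 * m - b] (q 0)) := by
        intro a b hab hb h
        split_ifs at h with h1 h2 h3 h4 h5 h6 h7
        · have := hqi a b (by omega) (by omega) h
          omega
        · have e1 := hlq a
          have e2 := hlb (b - l) (by omega)
          rw [← h] at e2
          omega
        · have e1 := hlq a
          have e2 := hla (l + 2 * m - b) (by omega)
          rw [← h] at e2
          omega
        all_goals first
          | omega
          | skip
        · have e1 := hlb (a - l) (by omega)
          have e2 := hlb (b - l) (by omega)
          rw [← h] at e2
          omega
        · have e1 := hlb (a - l) (by omega)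
          have e2 := hla (l + 2 * m - b) (by omega)
          rw [← h] at e2
          have e3 : a - l = l + 2 * m - b := by omega
          rw [← e3] at h
          exact hdiff' _ (by omega) h
        · have e1 := hla (l + 2 * m - a) (by omega)
          have e2 := hla (l + 2 * m - b) (by omega)
          rw [← h] at e2
          omega
      refine hasCycleLength_of_seq_s19 G (fun j => if j ≤ l then q j else if j ≤ l + m then
        par^[j - l] (q l) else par^[l + 2 * m - j] (q 0)) (2 * k) (by omega) ?_ ?_ ?_
      · intro a b ha hb h
        rcases lt_trichotomy a b with hab | hab | hab
        · exact absurd h (hlt a b hab hb)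
        · exact hab
        · exact absurd h.symm (hlt b a hab ha)
      · intro j hj
        rcases lt_trichotomy j l with h | h | h
        · rw [if_pos (by omega), if_pos (by omega)]
          exact hHG (hqa j h)
        · subst h
          rw [if_pos le_rfl, if_neg (by omega), if_pos (by omega), Nat.add_sub_cancel_left]
          exact hancadj 0 _ (hRq _) (by omega)
        · rw [if_neg (show ¬ j ≤ l by omega), if_neg (show ¬ j + 1 ≤ l by omega)]
          by_cases h1 : j + 1 ≤ l + m
          · rw [if_pos (by omega), if_pos h1, show j + 1 - l = j - l + 1 by omega]
            exact hancadj _ _ (hRq _) (by omega)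
          · rw [if_neg h1]
            have := hancadj (l + 2 * m - (j + 1)) _ (hRq 0) (by omega)
            rw [show l + 2 * m - (j + 1) + 1 = l + 2 * m - j by omega] at this
            by_cases h2 : j ≤ l + m
            · rw [if_pos h2, show j - l = m by omega, hsame]
              rw [show l + 2 * m - j = m by omega] at this
              exact this.symm
            · rw [if_neg h2]
              exact this.symm
      · rw [if_neg (by omega), if_pos (Nat.zero_le _)]
        have := hancadj 0 _ (hRq 0) (by omega)
        by_cases h2 : 2 * k - 1 ≤ l + m
        · rw [if_pos h2, show 2 * k - 1 - l = m by omega, hsame]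
          rw [show m = 0 + 1 by omega]
          exact this.symm
        · rw [if_neg h2, show l + 2 * m - (2 * k - 1) = 0 + 1 by omega]
          exact this.symm)
  have h2n : ∀ (n : ℕ) (z : ℤ), P (c z) = P (c (z + 2 * n)) ∧ lev (c (z + 2 * n)) = lev (c z) := by
    intro n z
    induction n with
    | zero => simp
    | succ n ih =>
      rw [show z + 2 * ((n + 1 : ℕ) : ℤ) = z + 2 * n + 2 by push_cast; ring, ← h2per, hl2]
      exact ih
  have hfin : ∀ z w : ℤ, z ≤ w → lev (c z) = i → lev (c w) = i → P (c z) = P (c w) := by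
    intro z w hzw hz hw
    obtain ⟨n, hn | hn⟩ : ∃ n : ℕ, w = z + 2 * n ∨ w = z + 2 * n + 1 :=
      ⟨((w - z) / 2).toNat, by omega⟩
    · rw [hn]; exact (h2n n z).1
    · have h1 := (h2n n z).2
      have h2 := hlc (z + 2 * n)
      rw [← hn] at h2
      omega
  have hP0 : P (c z0) := ⟨hz0, rfl⟩
  have hP1 : P (c z1) := by
    rcases le_total z0 z1 with h | h
    · rw [← hfin _ _ h hz0 hz1]; exact hP0
    · rw [hfin _ _ h hz1 hz0]; exact hP0
  exact hz01 hP1.2.symm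

/-! ### Edge counts and layers -/

theorem sum_card_filter_comm (G : SimpleGraph V) (s t : Finset V) :
    ∑ v ∈ s, (t.filter (G.Adj v)).card = ∑ v ∈ t, (s.filter (G.Adj v)).card := by
  simp only [Finset.card_filter]
  rw [Finset.sum_comm]
  simp only [G.adj_comm]

/-- Averaging over all vertex sets `S`: each edge crosses exactly half of them, so some `S` is
crossed by at least half of the edges. -/
theorem exists_bipartite_subgraph [Fintype V] (G : SimpleGraph V) :
    ∃ (B : SimpleGraph V) (S : Finset V), B ≤ G ∧ (∀ u v, B.Adj u v → (u ∈ S ↔ v ∉ S)) ∧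
      ∑ v, (Finset.univ.filter (G.Adj v)).card ≤
        2 * ∑ v, (Finset.univ.filter (B.Adj v)).card := by
  have hex : ∀ S : Finset V, ∃ B : SimpleGraph V,
      ∀ u v, B.Adj u v ↔ G.Adj u v ∧ (u ∈ S ↔ v ∉ S) := fun S =>
    ⟨{ Adj := fun u v => G.Adj u v ∧ (u ∈ S ↔ v ∉ S)
       symm := ⟨fun u v h => ⟨h.1.symm, by tauto⟩⟩
       loopless := ⟨fun u h => G.loopless.irrefl u h.1⟩ }, fun _ _ => Iff.rfl⟩
  choose B hB using hex
  suffices h : ∃ S, ∑ v, (Finset.univ.filter (G.Adj v)).card ≤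
      2 * ∑ v, (Finset.univ.filter ((B S).Adj v)).card by
    obtain ⟨S, hS⟩ := h
    exact ⟨B S, S, fun u v h => ((hB S u v).1 h).1, fun u v h => ((hB S u v).1 h).2, hS⟩
  have hhalf : ∀ v u, G.Adj v u → 2 * (Finset.univ.filter
      (fun S : Finset V => (v ∈ S ↔ u ∉ S))).card = (Finset.univ : Finset (Finset V)).card := by
    intro v u hvu
    rw [← Finset.card_filter_add_card_filter_not (s := (Finset.univ : Finset (Finset V)))
      (fun S : Finset V => (v ∈ S ↔ u ∉ S)), two_mul]
    congr 1
    have hne := hvu.ne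
    -- Toggling the membership of `v` in `S` swaps crossing and non-crossing.
    refine Finset.card_nbij' (fun S => symmDiff S {v}) (fun S => symmDiff S {v}) ?_ ?_ ?_ ?_
    · intro S hS
      simp [Finset.mem_symmDiff, hne.symm] at hS ⊢
      tauto
    · intro S hS
      simp [Finset.mem_symmDiff, hne.symm] at hS ⊢
      tauto
    · intro S _; simp
    · intro S _; simp
  by_contra hcon
  push Not at hcon
  have h1 : ∑ S : Finset V, 2 * ∑ v, (Finset.univ.filter ((B S).Adj v)).card <
      ∑ S : Finset V, ∑ v, (Finset.univ.filter (G.Adj v)).card :=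
    Finset.sum_lt_sum_of_nonempty Finset.univ_nonempty (fun S _ => hcon S)
  apply h1.ne
  simp only [Finset.card_filter, Finset.mul_sum, hB]
  rw [Finset.sum_comm, Finset.sum_comm (s := (Finset.univ : Finset (Finset V)))]
  refine Finset.sum_congr rfl fun v _ => ?_
  rw [Finset.sum_comm, Finset.sum_comm (s := (Finset.univ : Finset (Finset V)))]
  refine Finset.sum_congr rfl fun u _ => ?_
  by_cases hvu : G.Adj v u
  · have := hhalf v u hvu
    rw [Finset.card_filter] at this
    simp only [hvu, true_and, if_true, ← Finset.mul_sum]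
    rw [this]; simp
  · simp [hvu]

/-- Consecutive layers of a tree in a graph without a cycle of length `2k` span few edges. -/
theorem layer_edges_le [Fintype V] (G : SimpleGraph V) (lev : V → ℕ) (par : V → V)
    (x : V) (R : V → Prop)
    (hpar : ∀ v, R v → lev v ≠ 0 → G.Adj v (par v) ∧ R (par v) ∧ lev (par v) + 1 = lev v)
    (hroot : ∀ v, R v → lev v = 0 → v = x) (k i : ℕ) (hik : i < k)
    (hcyc : ¬ HasCycleLength G (2 * k)) (L : ℕ → Finset V)
    (hL : ∀ j v, v ∈ L j ↔ R v ∧ lev v = j) :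
    ∑ v ∈ L i, ((L (i + 1)).filter (G.Adj v)).card ≤ 3 * k * ((L i).card + (L (i + 1)).card) := by
  by_contra hlt
  push Not at hlt
  obtain ⟨H, hH⟩ : ∃ H : SimpleGraph V, ∀ u v, H.Adj u v ↔
      G.Adj u v ∧ (u ∈ L i ∧ v ∈ L (i + 1) ∨ u ∈ L (i + 1) ∧ v ∈ L i) :=
    ⟨{ Adj := fun u v => G.Adj u v ∧ (u ∈ L i ∧ v ∈ L (i + 1) ∨ u ∈ L (i + 1) ∧ v ∈ L i)
       symm := ⟨fun u v h => ⟨h.1.symm, by tauto⟩⟩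
       loopless := ⟨fun u h => G.loopless.irrefl u h.1⟩ }, fun _ _ => Iff.rfl⟩
  have hdisj : Disjoint (L i) (L (i + 1)) := by
    rw [Finset.disjoint_left]
    intro v h1 h2
    rw [hL] at h1 h2
    omega
  have hne : (L i ∪ L (i + 1)).Nonempty := by
    rw [Finset.nonempty_iff_ne_empty]
    intro h
    rw [Finset.union_eq_empty] at h
    simp [h.1] at hlt
  obtain ⟨W, -, hWn, hW⟩ := exists_min_degree H (3 * k) (L i ∪ L (i + 1)) hne (by
    rw [Finset.card_union_of_disjoint hdisj, Finset.sum_union hdisj]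
    have e1 : ∀ v ∈ L i, ((L (i + 1)).filter (G.Adj v)).card ≤
        ((L i ∪ L (i + 1)).filter (H.Adj v)).card := by
      intro v hv
      apply Finset.card_le_card
      intro u hu
      simp only [Finset.mem_filter, Finset.mem_union, hH] at hu ⊢
      tauto
    have e2 : ∀ v ∈ L (i + 1), ((L i).filter (G.Adj v)).card ≤
        ((L i ∪ L (i + 1)).filter (H.Adj v)).card := by
      intro v hv
      apply Finset.card_le_card
      intro u hu
      simp only [Finset.mem_filter, Finset.mem_union, hH] at hu ⊢
      tauto
    have e3 := sum_card_filter_comm G (L i) (L (i + 1))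
    have := Finset.sum_le_sum e1
    have := Finset.sum_le_sum e2
    rw [← e3] at this
    linarith)
  obtain ⟨N, r, c, hN, hr2, hrN, hper, hinj, hadj, hch⟩ :=
    exists_cycle_chord H W hWn (3 * k) (by omega) hW
  refine hcyc (cycle_of_theta G H lev par x R hpar hroot k i hik (fun u v h => ((hH u v).1 h).1) ?_ N r c
    (by push_cast at hN; omega) hr2 hrN hper hinj hadj hch)
  intro u v h
  have h2 := ((hH u v).1 h).2
  simp only [hL] at h2
  tauto

/-- Here `a i` is the size of layer `i`, `E i` the number of edges between layers `i` and `i + 1`,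
and `d` the minimum degree. -/
theorem growth (k : ℕ) (hk : 0 < k) (a E : ℕ → ℝ) (d q : ℝ) (hq : 1 ≤ q) (hd : 3 * k * (q + 3) ≤ d)
    (ha : ∀ i, 0 ≤ a i)
    (hE : ∀ i, i < k → E i ≤ 3 * k * (a i + a (i + 1))) (h0 : d * a 0 ≤ E 0)
    (h1 : ∀ i, d * a (i + 1) ≤ E i + E (i + 1)) :
    q ^ k * a 0 ≤ a k := by
  have hk' : (0 : ℝ) < 3 * k := by positivity
  have step : ∀ i, i < k → q * a i ≤ a (i + 1) := by
    intro i
    induction i with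
    | zero =>
      intro hi
      have := hE 0 hi
      have h2 := mul_le_mul_of_nonneg_right hd (ha 0)
      have h3 := ha 0
      refine le_of_mul_le_mul_left ?_ hk'
      nlinarith
    | succ i ih =>
      intro hi
      have e1 := ih (by omega)
      have e2 := hE i (by omega)
      have e3 := hE (i + 1) hi
      have e4 := h1 i
      have h2 := mul_le_mul_of_nonneg_right hd (ha (i + 1))
      have h3 : a i ≤ a (i + 1) := by nlinarith [ha i]
      have h4 := mul_le_mul_of_nonneg_left h3 hk'.le
      refine le_of_mul_le_mul_left ?_ hk'
      nlinarith
  have : ∀ i, i ≤ k → q ^ i * a 0 ≤ a i := by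
    intro i
    induction i with
    | zero => intro _; simp
    | succ i ih =>
      intro hi
      have e1 := ih (by omega)
      have e2 := step i (by omega)
      rw [pow_succ]
      nlinarith
  exact this k le_rfl

/-- A bipartite graph without a cycle of length `2k` and with minimum degree `d` on `W` has at
least `q ^ k` vertices, the size of the `k`-th distance layer, when `d ≥ 3k (q + 3)`. -/
theorem layers_grow [Fintype V] (G : SimpleGraph V) (W : Finset V) (hWn : W.Nonempty)
    (d k : ℕ) (hk : 0 < k) (S : Finset V)
    (hS : ∀ u v, G.Adj u v → (u ∈ S ↔ v ∉ S))
    (hW : ∀ v ∈ W, d ≤ (W.filter (G.Adj v)).card)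
    (hcyc : ¬ HasCycleLength G (2 * k)) (q : ℝ) (hq : 1 ≤ q) (hd : 3 * k * (q + 3) ≤ d) :
    q ^ k ≤ Fintype.card V := by
  obtain ⟨x, hx⟩ := hWn
  obtain ⟨G', hG'⟩ : ∃ G' : SimpleGraph V, ∀ u v, G'.Adj u v ↔ G.Adj u v ∧ u ∈ W ∧ v ∈ W :=
    ⟨{ Adj := fun u v => G.Adj u v ∧ u ∈ W ∧ v ∈ W
       symm := ⟨fun u v h => ⟨h.1.symm, h.2.2, h.2.1⟩⟩
       loopless := ⟨fun u h => G.loopless.irrefl u h.1⟩ }, fun _ _ => Iff.rfl⟩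
  have hcyc' : ¬ HasCycleLength G' (2 * k) := by
    rintro ⟨v, w, hw, hl⟩
    have hle : G' ≤ G := fun u v h => ((hG' u v).1 h).1
    exact hcyc ⟨v, w.mapLe hle, (SimpleGraph.Walk.isCycle_mapLe hle).2 hw, by simpa using hl⟩
  let R : V → Prop := fun v => G'.Reachable x v
  let lev : V → ℕ := fun v => G'.dist x v
  have hexp : ∀ v, ∃ u, R v → lev v ≠ 0 → G'.Adj v u ∧ R u ∧ lev u + 1 = lev v := by
    intro v
    by_cases hR : R v
    · by_cases h0 : lev v = 0
      · exact ⟨v, fun _ h => absurd h0 h⟩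
      · obtain ⟨p, hp⟩ := hR.exists_walk_length_eq_dist
        have hnil : ¬ p.Nil := by
          rw [← SimpleGraph.Walk.length_eq_zero_iff, hp]; exact h0
        have hadj := p.adj_penultimate hnil
        refine ⟨p.penultimate, fun _ _ => ⟨hadj.symm, hR.trans hadj.symm.reachable, ?_⟩⟩
        have e1 := G'.dist_le p.dropLast
        have e2 := hadj.diff_dist_adj (u := x)
        simp only [SimpleGraph.Walk.length_dropLast] at e1
        simp only [lev] at h0 ⊢
        omega
    · exact ⟨v, fun h => absurd h hR⟩
  choose par hpar using hexp
  obtain ⟨L, hL⟩ : ∃ L : ℕ → Finset V, ∀ j v, v ∈ L j ↔ R v ∧ lev v = j :=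
    ⟨fun j => Finset.univ.filter (fun v => R v ∧ lev v = j), by simp⟩
  have hroot : ∀ v, R v → lev v = 0 → v = x := fun v hR h => (hR.dist_eq_zero_iff.1 h).symm
  have hRW : ∀ v, R v → v ∈ W := by
    intro v hv
    by_cases h0 : lev v = 0
    · rw [hroot v hv h0]; exact hx
    · exact ((hG' _ _).1 (hpar v hv h0).1).2.1
  have hE : ∀ i, i < k → ∑ v ∈ L i, ((L (i + 1)).filter (G'.Adj v)).card ≤
      3 * k * ((L i).card + (L (i + 1)).card) := fun i hi =>
    layer_edges_le G' lev par x R hpar hroot k i hi hcyc' L hL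
  -- A vertex is on the same side as the root iff its level is even.
  have hcol : ∀ v, R v → ((x ∈ S ↔ v ∈ S) ↔ Even (lev v)) := by
    intro v hv
    obtain ⟨p, hp⟩ := hv.exists_walk_length_eq_dist
    let C : G'.Coloring Bool := SimpleGraph.Coloring.mk (fun v => decide (v ∈ S)) (by
      intro u v h
      have := hS u v ((hG' u v).1 h).1
      simp only [ne_eq, decide_eq_decide]; tauto)
    have := C.even_length_iff_congr p
    rw [hp] at this
    have hC : ∀ v, C v = true ↔ v ∈ S := fun v => decide_eq_true_iff
    rw [hC, hC] at this
    exact this.symm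
  have hnb : ∀ v u, R v → u ∈ W → G.Adj v u → R u ∧ (lev u = lev v + 1 ∨ lev u + 1 = lev v) := by
    intro v u hv hu hvu
    have hadj : G'.Adj v u := (hG' v u).2 ⟨hvu, hRW v hv, hu⟩
    have hRu : R u := hv.trans hadj.reachable
    refine ⟨hRu, ?_⟩
    have e1 := hadj.diff_dist_adj (u := x)
    have e2 := hcol v hv
    have e3 := hcol u hRu
    have e4 := hS v u hvu
    have e5 : lev u ≠ lev v := by
      intro h; rw [h] at e3; tauto
    simp only [lev] at e5 ⊢
    omega
  have hL0 : (L 0).card = 1 := by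
    rw [Finset.card_eq_one]
    refine ⟨x, ?_⟩
    ext v
    rw [hL, Finset.mem_singleton]
    refine ⟨fun h => hroot v h.1 h.2, ?_⟩
    rintro rfl
    exact ⟨SimpleGraph.Reachable.refl _, SimpleGraph.dist_self⟩
  have h0 : d * (L 0).card ≤ ∑ v ∈ L 0, ((L 1).filter (G'.Adj v)).card := by
    rw [mul_comm, ← smul_eq_mul]
    refine Finset.card_nsmul_le_sum _ _ _ fun v hv => ?_
    rw [hL] at hv
    refine (hW v (hRW v hv.1)).trans (Finset.card_le_card fun u hu => ?_)
    rw [Finset.mem_filter] at hu ⊢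
    have := hnb v u hv.1 hu.1 hu.2
    exact ⟨(hL _ _).2 ⟨this.1, by omega⟩, (hG' v u).2 ⟨hu.2, hRW v hv.1, hu.1⟩⟩
  have h1 : ∀ i, d * (L (i + 1)).card ≤ ∑ v ∈ L i, ((L (i + 1)).filter (G'.Adj v)).card +
      ∑ v ∈ L (i + 1), ((L (i + 1 + 1)).filter (G'.Adj v)).card := by
    intro i
    rw [sum_card_filter_comm G' (L i) (L (i + 1)), ← Finset.sum_add_distrib, mul_comm, ← smul_eq_mul]
    refine Finset.card_nsmul_le_sum _ _ _ fun v hv => ?_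
    rw [hL] at hv
    refine (hW v (hRW v hv.1)).trans (le_trans (Finset.card_le_card fun u hu => ?_)
      (Finset.card_union_le _ _))
    rw [Finset.mem_filter] at hu
    have := hnb v u hv.1 hu.1 hu.2
    have hadj : G'.Adj v u := (hG' v u).2 ⟨hu.2, hRW v hv.1, hu.1⟩
    rw [Finset.mem_union, Finset.mem_filter, Finset.mem_filter, hL, hL]
    rcases this with ⟨h, h' | h'⟩
    · exact Or.inr ⟨⟨h, by omega⟩, hadj⟩
    · exact Or.inl ⟨⟨h, by omega⟩, hadj⟩
  have := growth k hk (fun i => ((L i).card : ℝ))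
    (fun i => ((∑ v ∈ L i, ((L (i + 1)).filter (G'.Adj v)).card : ℕ) : ℝ)) d q hq hd
    (fun i => Nat.cast_nonneg _) (fun i hi => by exact_mod_cast hE i hi)
    (by exact_mod_cast h0) (fun i => by exact_mod_cast h1 i)
  rw [hL0, Nat.cast_one, mul_one] at this
  exact this.trans (by exact_mod_cast Finset.card_le_univ _)

end

/-- Bondy–Simonovits: a graph on n vertices with more than 90k·n^(1+1/k) edges contains
a cycle of length 2k. -/
theorem bondy_simonovits (k : ℕ) (hk : 0 < k) (n : ℕ) (G : SimpleGraph (Fin n))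
    (hedges : 90 * (k : ℝ) * (n : ℝ) ^ ((1 : ℝ) + 1 / (k : ℝ)) < (G.edgeSet.ncard : ℝ)) :
    HasCycleLength G (2 * k) := by
  by_contra hcyc
  have hn : 0 < n := by
    rcases Nat.eq_zero_or_pos n with rfl | h
    · have : G.edgeSet = ∅ := by
        rw [Set.eq_empty_iff_forall_notMem]
        intro e
        induction e with
        | _ a b => exact a.elim0
      rw [this, Set.ncard_empty] at hedges
      have : (0 : ℝ) ≤ 90 * (k : ℝ) * ((0 : ℕ) : ℝ) ^ ((1 : ℝ) + 1 / (k : ℝ)) := by positivity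
      push_cast at *
      linarith
    · exact h
  have hn' : (1 : ℝ) ≤ n := by exact_mod_cast hn
  have hk' : (1 : ℝ) ≤ k := by exact_mod_cast hk
  set y : ℝ := (n : ℝ) ^ (1 / (k : ℝ)) with hy
  have hy1 : 1 ≤ y := Real.one_le_rpow hn' (by positivity)
  have hyk : y ^ k = n := by
    rw [hy, one_div]
    exact Real.rpow_inv_natCast_pow (by positivity) hk.ne'
  rw [Real.rpow_add (by linarith), Real.rpow_one, ← hy] at hedges
  obtain ⟨B, S, hle, hBS, hS⟩ := exists_bipartite_subgraph G
  have hcycB : ¬ HasCycleLength B (2 * k) := by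
    rintro ⟨v, w, hw, hl⟩
    exact hcyc ⟨v, w.mapLe hle, (SimpleGraph.Walk.isCycle_mapLe hle).2 hw, by simpa using hl⟩
  have hdeg : ∑ v, (Finset.univ.filter (G.Adj v)).card = 2 * G.edgeSet.ncard := by
    have := G.sum_degrees_eq_twice_card_edges
    rw [← SimpleGraph.coe_edgeFinset, Set.ncard_coe_finset, ← this]
    refine Finset.sum_congr rfl fun v _ => ?_
    rw [← SimpleGraph.card_neighborFinset_eq_degree, SimpleGraph.neighborFinset_eq_filter]
  set d := ⌊45 * k * y⌋₊ with hd
  have hdle : (d : ℝ) ≤ 45 * k * y := Nat.floor_le (by positivity)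
  have hdlt : 45 * k * y < d + 1 := Nat.lt_floor_add_one _
  have hBsum : G.edgeSet.ncard ≤ ∑ v, (Finset.univ.filter (B.Adj v)).card := by
    rw [hdeg] at hS
    exact Nat.le_of_mul_le_mul_left hS (by norm_num)
  obtain ⟨W, -, hWn, hW⟩ := exists_min_degree B d Finset.univ ⟨⟨0, hn⟩, Finset.mem_univ _⟩ (by
    refine le_trans ?_ hBsum
    rw [Finset.card_univ, Fintype.card_fin]
    have : ((2 * d * n : ℕ) : ℝ) ≤ G.edgeSet.ncard := by
      push_cast
      have := mul_le_mul_of_nonneg_right hdle (by linarith : (0 : ℝ) ≤ n)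
      linarith
    exact_mod_cast this)
  have hky : 1 ≤ (k : ℝ) * y := one_le_mul_of_one_le_of_one_le hk' hy1
  have := layers_grow B W hWn d k hk S hBS hW hcycB (11 * y) (by linarith) (by
    nlinarith)
  rw [Fintype.card_fin, mul_pow, hyk] at this
  have h11 : (11 : ℝ) ≤ 11 ^ k := le_self_pow₀ (by norm_num) hk.ne'
  nlinarith
end
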